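/- arXiv:2511.02679 — 2 statements merged into one kernel-verified Lean document; each statement's English description precedes it below -/
import Mathlib

section
/- There exists an absolute constant C > 1 such that for every n, k, d ∈ ℕ, every choice of k₁, …, k_n ∈ ℕ ∪ {0} with k = k₁ + … + k_n, and every polynomial f ∈ 𝒫_d(ℝⁿ) satisfying |∂^k f / (∂x₁^{k₁} … ∂x_n^{k_n})(x)| ≥ 1 for all x ∈ Qⁿ, one has σ(μ_{Qⁿ} ∘ f⁻¹, t) ≤ C d k t^{1/k} for all t > 0. -/
/-!
The estimate is proved by induction on the order of the derivative, one coordinate derivative at a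
time. Write `g = ∂ᵢ f` and split, for `ε > 0`,
`φ'(f) = φ'(f) g · g / (g² + ε²) + φ'(f) ε² / (g² + ε²)`.

On each line in the direction `i`, `φ'(f) g` is the derivative of `φ ∘ f`, so the first term is
integrated by parts. The weight `g / (g² + ε²)` is bounded by `1 / (2 ε)`, and its derivative
has the sign of the polynomial `g' (ε² - g²)`, of degree at most `3 d`; hence its total variation
is `O(d / ε)` (`variation_le_of_polynomial`) and the first term contributes at most `5 d t / ε`
(`line_bound`). This does not depend on the dimension.

The second term is at most `∫ ε² / (g² + ε²) = ∫ ψ'(g)` with `ψ(x) = ε arctan (x / ε)`, which is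
again an admissible test function, bounded by `π ε / 2`; so it is controlled by the modulus of `g`,
to which the induction hypothesis applies (`step_bound`, `list_bound`). With
`ε = t ^ (m / (m + 1))` both terms are of order `t ^ (1 / (m + 1))`, and the constant `12 d m`
becomes at most `12 d (m + 1)` since `m (π/2)^(1/m) ≤ m + (π/2 - 1)` and `π/2 < 2`
(`mul_pi_rpow_le`). For the first order `|g| ≥ 1`, so the weight is bounded by `1` and
`ε = √t` suffices.
-/

open MeasureTheory

noncomputable section

/-- The class `C_b^∞(ℝ)` of bounded smooth functions on `ℝ`
with bounded derivatives of every order. -/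
def CbSmooth (φ : ℝ → ℝ) : Prop :=
  ContDiff ℝ (⊤ : ℕ∞) φ ∧ ∀ k : ℕ, ∃ M : ℝ, ∀ t : ℝ, |iteratedDeriv k φ t| ≤ M

/-- The modulus `σ(ν, ε)` of a Borel measure `ν` on `ℝ`. -/
def sigmaMod (ν : Measure ℝ) (ε : ℝ) : ℝ :=
  sSup {y : ℝ | ∃ φ : ℝ → ℝ, CbSmooth φ ∧ (∀ t, |φ t| ≤ ε) ∧ (∀ t, |deriv φ t| ≤ 1) ∧
    y = ∫ t, deriv φ t ∂ν}

/-- The mixed partial derivative `∂^{k₁+⋯+k_n}/(∂x₁^{k₁} ⋯ ∂x_n^{k_n})` of a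
polynomial (the partial derivatives commute, so the order of application is
irrelevant). -/
def mixedPDeriv {n : ℕ} (k : Fin n → ℕ) (f : MvPolynomial (Fin n) ℝ) :
    MvPolynomial (Fin n) ℝ :=
  (List.ofFn fun i : Fin n => fun g : MvPolynomial (Fin n) ℝ =>
    (fun g' => MvPolynomial.pderiv i g')^[k i] g).foldr (fun F g => F g) f

/-- The unit cube `Qⁿ = [-1/2, 1/2]ⁿ`. -/
def unitCube (n : ℕ) : Set (Fin n → ℝ) :=
  Set.Icc (fun _ => -(1 / 2 : ℝ)) fun _ => (1 / 2 : ℝ)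

/-- The uniform probability measure `μ_{Qⁿ}` on the unit cube. -/
def cubeMeasure (n : ℕ) : Measure (Fin n → ℝ) := volume.restrict (unitCube n)

/-- A function bounded by `M` whose continuous derivative `v` vanishes at no more than `S.card`
interior points has total variation at most `2 * M * (S.card + 1)`: it is monotone between
consecutive zeros of `v`. -/
lemma variation_le {u v : ℝ → ℝ} {M : ℝ} (hv : Continuous v) (hu : ∀ x, HasDerivAt u (v x) x)
    (N : ℕ) :
    ∀ (S : Finset ℝ) (a b : ℝ), S.card ≤ N → a ≤ b → (∀ x ∈ Set.Icc a b, |u x| ≤ M) → (∀ x ∈ Set.Ioo a b, v x = 0 → x ∈ S) →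
      ∫ x in a..b, |v x| ≤ 2 * M * (S.card + 1) := by
  induction N with
  | zero => ?_
  | succ N ih => ?_
  all_goals
    intro S a b hS hab hM hz
    have hM0 : 0 ≤ M := (abs_nonneg _).trans (hM a ⟨le_rfl, hab⟩)
    by_cases hne : ∃ c ∈ Set.Ioo a b, v c = 0
  · obtain ⟨c, hc, hvc⟩ := hne
    have := Finset.card_pos.2 ⟨c, hz c hc hvc⟩
    omega
  rotate_left
  · obtain ⟨c, hc, hvc⟩ := hne
    have hcS := hz c hc hvc
    have hl : (S.filter (· < c)).card + (S.filter (c < ·)).card + 1 ≤ S.card := by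
      have h1 : Disjoint (S.filter (· < c)) (S.filter (c < ·)) := by
        rw [Finset.disjoint_left]
        intro x hx hx'
        simp only [Finset.mem_filter] at hx hx'
        linarith [hx.2, hx'.2]
      rw [← Finset.card_union_of_disjoint h1]
      have h2 : c ∉ S.filter (· < c) ∪ S.filter (c < ·) := by simp
      rw [← Finset.card_insert_of_notMem h2]
      apply Finset.card_le_card
      intro x hx
      simp only [Finset.mem_insert, Finset.mem_union, Finset.mem_filter] at hx
      rcases hx with rfl | hx | hx
      · exact hcS
      · exact hx.1
      · exact hx.1
    have i1 := ih (S.filter (· < c)) a c (by omega) hc.1.le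
      (fun x hx => hM x ⟨hx.1, hx.2.trans hc.2.le⟩) (fun x hx h0 => by
      simp only [Finset.mem_filter]
      exact ⟨hz x ⟨hx.1, hx.2.trans hc.2⟩ h0, hx.2⟩)
    have i2 := ih (S.filter (c < ·)) c b (by omega) hc.2.le
      (fun x hx => hM x ⟨hc.1.le.trans hx.1, hx.2⟩) (fun x hx h0 => by
      simp only [Finset.mem_filter]
      exact ⟨hz x ⟨hc.1.trans hx.1, hx.2⟩ h0, hx.1⟩)
    rw [← intervalIntegral.integral_add_adjacent_intervals (b := c)
      (hv.abs.intervalIntegrable _ _) (hv.abs.intervalIntegrable _ _)]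
    have hl' : ((S.filter (· < c)).card : ℝ) + (S.filter (c < ·)).card + 1 ≤ S.card := by
      exact_mod_cast hl
    nlinarith [mul_le_mul_of_nonneg_left hl' hM0]
  all_goals
    push Not at hne
    have hftc : ∫ x in a..b, v x = u b - u a :=
      intervalIntegral.integral_eq_sub_of_hasDerivAt (fun x _ => hu x)
        (hv.intervalIntegrable _ _)
    have hsign : (∀ x ∈ Set.Ioo a b, 0 ≤ v x) ∨ (∀ x ∈ Set.Ioo a b, v x ≤ 0) := by
      by_contra! hcon
      obtain ⟨⟨x, hx, hx0⟩, ⟨y, hy, hy0⟩⟩ := hcon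
      obtain ⟨z, hz, hz0⟩ := isPreconnected_Ioo.intermediate_value hx hy hv.continuousOn
        ⟨hx0.le, hy0.le⟩
      exact hne z hz hz0
    have hb1 := abs_le.1 (hM a ⟨le_rfl, hab⟩)
    have hb2 := abs_le.1 (hM b ⟨hab, le_rfl⟩)
    have hmain : ∫ x in a..b, |v x| ≤ 2 * M := by
      rcases hsign with h | h
      · rw [intervalIntegral.integral_of_le hab, MeasureTheory.integral_Ioc_eq_integral_Ioo,
          MeasureTheory.setIntegral_congr_fun measurableSet_Ioo (g := v)
            (fun x hx => abs_of_nonneg (h x hx)),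
          ← MeasureTheory.integral_Ioc_eq_integral_Ioo, ← intervalIntegral.integral_of_le hab]
        linarith
      · rw [intervalIntegral.integral_of_le hab, MeasureTheory.integral_Ioc_eq_integral_Ioo,
          MeasureTheory.setIntegral_congr_fun measurableSet_Ioo (g := fun x => - v x)
            (fun x hx => abs_of_nonpos (h x hx)),
          ← MeasureTheory.integral_Ioc_eq_integral_Ioo, ← intervalIntegral.integral_of_le hab,
          intervalIntegral.integral_neg]
        linarith
    have : (0:ℝ) ≤ S.card := Nat.cast_nonneg _
    nlinarith

/-- The same bound when the zeros of the derivative are controlled by a polynomial `q`. -/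
lemma variation_le_of_polynomial {v u : ℝ → ℝ} {M : ℝ} (hv : Continuous v)
    (hu : ∀ x, HasDerivAt u (v x) x) (q : Polynomial ℝ)
    (w : ℝ → ℝ) (hw : ∀ x, w x ≠ 0) (hq : ∀ x, v x = q.eval x * w x) {N : ℕ}
    (hN : q.natDegree ≤ N) {a b : ℝ} (hab : a ≤ b)
    (hM : ∀ x ∈ Set.Icc a b, |u x| ≤ M) :
    ∫ x in a..b, |v x| ≤ 2 * M * (N + 1) := by
  have hM0 : 0 ≤ M := (abs_nonneg _).trans (hM a ⟨le_rfl, hab⟩)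
  by_cases h0 : q = 0
  · have : ∀ x, |v x| = 0 := fun x => by simp [hq, h0]
    simp only [this, intervalIntegral.integral_zero]
    positivity
  · have h1 := variation_le hv hu _ q.roots.toFinset a b le_rfl hab hM (fun x _ hx => by
      rw [Multiset.mem_toFinset, Polynomial.mem_roots h0]
      rw [hq] at hx
      exact (mul_eq_zero.1 hx).resolve_right (hw x))
    have h2 : (q.roots.toFinset.card : ℝ) ≤ N := by
      exact_mod_cast ((Multiset.toFinset_card_le _).trans q.card_roots').trans hN
    refine h1.trans ?_
    gcongr

/-- The test functions of the argument: `C¹` functions bounded by `t` with derivative bounded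
by `1`. Nothing is asked of the higher derivatives, unlike in `CbSmooth`. -/
structure IsTest (φ : ℝ → ℝ) (t : ℝ) : Prop where
  contDiff : ContDiff ℝ 1 φ
  bound : ∀ x, |φ x| ≤ t
  deriv_bound : ∀ x, |deriv φ x| ≤ 1

/-- One-dimensional estimate: the weight `g / (g² + ε²)`, with `g = p'`, replaces `1 / g` in the
usual integration by parts and stays bounded where `g` is small; its derivative has the sign of
a polynomial of degree at most `3 * d`. -/
lemma line_bound {φ : ℝ → ℝ} {t : ℝ} (hφ : IsTest φ t) {d : ℕ} (hd : 0 < d) (p g : Polynomial ℝ)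
    (hp : g.natDegree ≤ d) (hg : p.derivative = g) {ε M : ℝ} (hε : 0 < ε)
    (hM : ∀ x ∈ Set.Icc (-(1 / 2 : ℝ)) (1 / 2), |g.eval x / (g.eval x ^ 2 + ε ^ 2)| ≤ M) :
    |∫ x in (-(1 / 2 : ℝ))..(1 / 2 : ℝ), deriv φ (p.eval x) *
        (g.eval x ^ 2 / (g.eval x ^ 2 + ε ^ 2))| ≤ 10 * d * t * M := by
  have hpos : ∀ x, 0 < g.eval x ^ 2 + ε ^ 2 := fun x => by positivity
  have ht : 0 ≤ t := (abs_nonneg _).trans (hφ.bound 0)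
  set u : ℝ → ℝ := fun x => g.eval x / (g.eval x ^ 2 + ε ^ 2) with hu_def
  set q : Polynomial ℝ := g.derivative * (Polynomial.C (ε ^ 2) - g ^ 2) with hq
  set w : ℝ → ℝ := fun x => ((g.eval x ^ 2 + ε ^ 2) ^ 2)⁻¹ with hw
  set v : ℝ → ℝ := fun x => q.eval x * w x with hv
  have hu : ∀ x, HasDerivAt u (v x) x := by
    intro x
    have h1 := (g.hasDerivAt x).div (((g.hasDerivAt x).pow 2).add_const (ε ^ 2)) (hpos x).ne'
    refine h1.congr_deriv ?_
    have := (hpos x).ne'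
    simp only [hv, hq, hw, Polynomial.eval_mul, Polynomial.eval_sub, Polynomial.eval_C,
      Polynomial.eval_pow, Pi.pow_apply]
    field_simp
    ring
  have hvc : Continuous v := by
    refine q.continuous.mul (Continuous.inv₀ ?_ fun x => (pow_pos (hpos x) 2).ne')
    have := g.continuous
    fun_prop
  have hqd : q.natDegree ≤ 3 * d := by
    refine Polynomial.natDegree_mul_le.trans ?_
    have h1 : g.derivative.natDegree ≤ d :=
      (Polynomial.natDegree_derivative_le g).trans ((Nat.sub_le _ _).trans hp)
    have h2 : (Polynomial.C (ε ^ 2) - g ^ 2).natDegree ≤ 2 * d := by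
      refine (Polynomial.natDegree_sub_le _ _).trans (max_le (by simp) ?_)
      exact Polynomial.natDegree_pow_le.trans (by gcongr)
    omega
  have hle : (-(1 / 2 : ℝ)) ≤ 1 / 2 := by norm_num
  have hvar := variation_le_of_polynomial hvc hu q w
    (fun x => inv_ne_zero (pow_pos (hpos x) 2).ne') (fun x => rfl) hqd hle hM
  have hφd : ∀ y, HasDerivAt φ (deriv φ y) y := fun y =>
    (hφ.contDiff.differentiable (by norm_num) y).hasDerivAt
  have hφc : Continuous (deriv φ) := hφ.contDiff.continuous_deriv le_rfl
  have hcomp : ∀ x, HasDerivAt (fun x => φ (p.eval x)) (deriv φ (p.eval x) * g.eval x) x := by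
    intro x
    have := (hφd (p.eval x)).comp x (p.hasDerivAt x)
    rwa [hg] at this
  have hcc : Continuous fun x => deriv φ (p.eval x) * g.eval x :=
    (hφc.comp p.continuous).mul g.continuous
  have hparts := intervalIntegral.integral_mul_deriv_eq_deriv_mul (a := -(1 / 2 : ℝ))
    (b := 1 / 2) (fun x _ => hu x) (fun x _ => hcomp x) (hvc.intervalIntegrable _ _)
    (hcc.intervalIntegrable _ _)
  have heq : ∀ x, deriv φ (p.eval x) * (g.eval x ^ 2 / (g.eval x ^ 2 + ε ^ 2)) =
      u x * (deriv φ (p.eval x) * g.eval x) := fun x => by simp only [hu_def]; ring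
  simp only [heq]
  rw [hparts]
  have hM0 : 0 ≤ M := (abs_nonneg _).trans (hM _ ⟨le_rfl, hle⟩)
  have hb : ∀ x ∈ Set.Icc (-(1 / 2 : ℝ)) (1 / 2), |u x * φ (p.eval x)| ≤ M * t := fun x hx => by
    rw [abs_mul]
    exact mul_le_mul (hM x hx) (hφ.bound _) (abs_nonneg _) hM0
  have h1 := hb _ ⟨hle, le_rfl⟩
  have h2 := hb _ ⟨le_rfl, hle⟩
  have h3 : |∫ x in (-(1 / 2 : ℝ))..(1 / 2 : ℝ), v x * φ (p.eval x)| ≤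
      ∫ x in (-(1 / 2 : ℝ))..(1 / 2 : ℝ), |v x| * t := by
    rw [← Real.norm_eq_abs]
    refine intervalIntegral.norm_integral_le_of_norm_le hle
      (Filter.Eventually.of_forall fun x _ => ?_)
      ((hvc.abs.intervalIntegrable _ _).mul_const t)
    rw [Real.norm_eq_abs, abs_mul]
    exact mul_le_mul_of_nonneg_left (hφ.bound _) (abs_nonneg _)
  rw [intervalIntegral.integral_mul_const] at h3
  have h4 := h3.trans (mul_le_mul_of_nonneg_right hvar ht)
  refine (abs_sub _ _).trans ((add_le_add ((abs_sub _ _).trans (add_le_add h1 h2)) h4).trans ?_)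
  have hd' : (1 : ℝ) ≤ d := by exact_mod_cast hd
  have : 0 ≤ M * t := mul_nonneg hM0 ht
  push_cast
  nlinarith

lemma volume_unitCube (n : ℕ) : (volume : Measure (Fin n → ℝ)).real (unitCube n) = 1 := by
  rw [Measure.real, unitCube, Real.volume_Icc_pi]
  norm_num

/-- A bound for the integrals over all unit segments in the direction `i` is a bound for the
integral over the cube. -/
lemma cube_integral_le {m : ℕ} (i : Fin (m + 1)) {F : (Fin (m + 1) → ℝ) → ℝ} (hF : Continuous F)
    {K : ℝ}
    (h : ∀ y ∈ unitCube m, |∫ s in (-(1 / 2 : ℝ))..(1 / 2 : ℝ), F (i.insertNth s y)| ≤ K) :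
    |∫ x in unitCube (m + 1), F x| ≤ K := by
  have he := (volume_preserving_piFinSuccAbove (fun _ : Fin (m + 1) => ℝ) i).symm
  have hpre : (MeasurableEquiv.piFinSuccAbove (fun _ : Fin (m + 1) => ℝ) i).symm ⁻¹'
      unitCube (m + 1) = Set.Icc (-(1 / 2 : ℝ)) (1 / 2) ×ˢ unitCube m := by
    ext ⟨s, y⟩
    change i.insertNth s y ∈ unitCube (m + 1) ↔ _
    simp only [unitCube, Set.mem_Icc, Set.mem_prod, Fin.insertNth_le_iff, Fin.le_insertNth_iff]
    tauto
  rw [← he.setIntegral_preimage_emb (MeasurableEquiv.measurableEmbedding _), hpre,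
    Measure.volume_eq_prod, ← Measure.prod_restrict, integral_prod_symm]
  · have := norm_setIntegral_le_of_norm_le_const (μ := (volume : Measure (Fin m → ℝ)))
      (s := unitCube m) (C := K) (f := fun y => ∫ s in Set.Icc (-(1 / 2 : ℝ)) (1 / 2),
        F (i.insertNth s y)) isCompact_Icc.measure_lt_top (fun y hy => by
          have := h y hy
          rwa [intervalIntegral.integral_of_le (by norm_num),
            ← integral_Icc_eq_integral_Ioc] at this)
    rw [volume_unitCube, mul_one] at this
    exact this
  · rw [Measure.prod_restrict]
    refine ContinuousOn.integrableOn_compact (isCompact_Icc.prod isCompact_Icc) ?_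
    refine Continuous.continuousOn (hF.comp ?_)
    exact Continuous.finInsertNth (A := fun _ => ℝ) i continuous_fst continuous_snd

lemma totalDegree_pderiv_le {n : ℕ} (i : Fin n) (f : MvPolynomial (Fin n) ℝ) :
    (MvPolynomial.pderiv i f).totalDegree ≤ f.totalDegree := by
  refine Finset.sup_le fun m hm => ?_
  rw [MvPolynomial.mem_support_iff, MvPolynomial.coeff_pderiv] at hm
  have h := MvPolynomial.le_totalDegree (MvPolynomial.mem_support_iff.2 (left_ne_zero_of_mul hm))
  rw [Finsupp.sum_add_index' (fun _ => rfl) (fun _ _ _ => rfl)] at h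
  omega

/-- The restriction of `f` to the line through `y` in the direction of the `i`-th coordinate,
as a polynomial in one variable. -/
def restrictLine {m : ℕ} (i : Fin (m + 1)) (y : Fin m → ℝ) :
    MvPolynomial (Fin (m + 1)) ℝ →ₐ[ℝ] Polynomial ℝ :=
  MvPolynomial.aeval (i.insertNth Polynomial.X fun j => Polynomial.C (y j))

lemma eval_restrictLine {m : ℕ} (i : Fin (m + 1)) (y : Fin m → ℝ)
    (f : MvPolynomial (Fin (m + 1)) ℝ) (s : ℝ) :
    (restrictLine i y f).eval s = MvPolynomial.eval (i.insertNth s y) f := by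
  induction f using MvPolynomial.induction_on with
  | C a => simp [restrictLine]
  | add p q hp hq => simp [hp, hq]
  | mul_X p j hp =>
    rw [map_mul, Polynomial.eval_mul, hp, map_mul]
    congr 1
    refine Fin.succAboveCases i ?_ ?_ j <;> simp [restrictLine]

lemma derivative_restrictLine {m : ℕ} (i : Fin (m + 1)) (y : Fin m → ℝ)
    (f : MvPolynomial (Fin (m + 1)) ℝ) :
    (restrictLine i y f).derivative = restrictLine i y (MvPolynomial.pderiv i f) := by
  induction f using MvPolynomial.induction_on with
  | C a => simp [restrictLine]
  | add p q hp hq => simp [hp, hq]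
  | mul_X p j hp =>
    rw [map_mul, Polynomial.derivative_mul, hp, MvPolynomial.pderiv_mul, map_add, map_mul, map_mul]
    congr 2
    refine Fin.succAboveCases i ?_ (fun l => ?_) j
    · simp [restrictLine]
    · rw [MvPolynomial.pderiv_X_of_ne (Fin.succAbove_ne i l)]
      simp [restrictLine]

lemma natDegree_restrictLine_le {m d : ℕ} (i : Fin (m + 1)) (y : Fin m → ℝ)
    {f : MvPolynomial (Fin (m + 1)) ℝ} (hf : f.totalDegree ≤ d) :
    (restrictLine i y f).natDegree ≤ d := by
  have := MvPolynomial.aeval_natDegree_le (n := 1) f hf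
    (i.insertNth Polynomial.X fun j => Polynomial.C (y j)) (fun j => by
      refine Fin.succAboveCases i ?_ ?_ j <;> simp)
  simpa [restrictLine] using this

lemma setIntegral_cube_add {n : ℕ} {F G H : (Fin n → ℝ) → ℝ} (hF : Continuous F)
    (hG : Continuous G) (h : ∀ x, H x = F x + G x) :
    ∫ x in unitCube n, H x = (∫ x in unitCube n, F x) + ∫ x in unitCube n, G x := by
  simp only [h]
  exact integral_add (hF.continuousOn.integrableOn_compact isCompact_Icc)
    (hG.continuousOn.integrableOn_compact isCompact_Icc)

/-- One differentiation step: the integral of `φ' ∘ f` is controlled by the smoothed size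
`∫ ε² / ((∂ᵢ f)² + ε²)` of the sublevel sets of `∂ᵢ f`, up to `10 * d * t * M`. -/
lemma step_bound {n d : ℕ} (hd : 0 < d) (i : Fin n) {f : MvPolynomial (Fin n) ℝ}
    (hf : f.totalDegree ≤ d) {φ : ℝ → ℝ} {t : ℝ} (hφ : IsTest φ t) {ε M : ℝ} (hε : 0 < ε)
    (hM : ∀ x ∈ unitCube n, |MvPolynomial.eval x (MvPolynomial.pderiv i f) /
      (MvPolynomial.eval x (MvPolynomial.pderiv i f) ^ 2 + ε ^ 2)| ≤ M) :
    |∫ x in unitCube n, deriv φ (MvPolynomial.eval x f)| ≤ 10 * d * t * M +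
      ∫ x in unitCube n, ε ^ 2 / (MvPolynomial.eval x (MvPolynomial.pderiv i f) ^ 2 + ε ^ 2) := by
  obtain _ | m := n
  · exact i.elim0
  set g := MvPolynomial.pderiv i f with hg
  have hpos : ∀ x, 0 < MvPolynomial.eval x g ^ 2 + ε ^ 2 := fun x => by positivity
  have hfc : Continuous fun x => MvPolynomial.eval x f := MvPolynomial.continuous_eval f
  have hgc : Continuous fun x => MvPolynomial.eval x g := MvPolynomial.continuous_eval g
  have hφc : Continuous (deriv φ) := hφ.contDiff.continuous_deriv le_rfl
  have hden : Continuous fun x => MvPolynomial.eval x g ^ 2 + ε ^ 2 := by fun_prop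
  have c1 : Continuous fun x => deriv φ (MvPolynomial.eval x f) *
      (MvPolynomial.eval x g ^ 2 / (MvPolynomial.eval x g ^ 2 + ε ^ 2)) :=
    (hφc.comp hfc).mul ((hgc.pow 2).div hden fun x => (hpos x).ne')
  have c3 : Continuous fun x => ε ^ 2 / (MvPolynomial.eval x g ^ 2 + ε ^ 2) :=
    continuous_const.div hden fun x => (hpos x).ne'
  have c2 : Continuous fun x => deriv φ (MvPolynomial.eval x f) *
      (ε ^ 2 / (MvPolynomial.eval x g ^ 2 + ε ^ 2)) := (hφc.comp hfc).mul c3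
  rw [setIntegral_cube_add (H := fun x => deriv φ (MvPolynomial.eval x f)) c1 c2 fun x => by
    have := (hpos x).ne'
    field_simp]
  refine (abs_add_le _ _).trans (add_le_add ?_ ?_)
  · refine cube_integral_le i c1 fun y hy => ?_
    have := line_bound hφ hd (restrictLine i y f) (restrictLine i y g)
      (natDegree_restrictLine_le i y ((totalDegree_pderiv_le i f).trans hf))
      (derivative_restrictLine i y f) hε (M := M) (fun s hs => by
        rw [eval_restrictLine]
        refine hM _ ?_
        simp only [unitCube, Set.mem_Icc, Fin.insertNth_le_iff, Fin.le_insertNth_iff] at hs hy ⊢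
        tauto)
    simpa only [eval_restrictLine] using this
  · rw [← Real.norm_eq_abs]
    refine norm_integral_le_of_norm_le
      (c3.continuousOn.integrableOn_compact isCompact_Icc)
      (Filter.Eventually.of_forall fun x => ?_)
    rw [Real.norm_eq_abs, abs_mul, abs_of_nonneg (div_pos (pow_pos hε 2) (hpos x)).le]
    exact mul_le_of_le_one_left (div_pos (pow_pos hε 2) (hpos x)).le (hφ.deriv_bound _)

/-- The smoothed indicator `ε² / (x² + ε²)` is the derivative of an admissible test function. -/
lemma isTest_arctan {ε : ℝ} (hε : 0 < ε) :
    IsTest (fun x => ε * Real.arctan (x / ε)) (Real.pi / 2 * ε) ∧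
      ∀ x, deriv (fun x => ε * Real.arctan (x / ε)) x = ε ^ 2 / (x ^ 2 + ε ^ 2) := by
  have hder : ∀ x, deriv (fun x => ε * Real.arctan (x / ε)) x = ε ^ 2 / (x ^ 2 + ε ^ 2) := by
    intro x
    have h := (((hasDerivAt_id' x).div_const ε).arctan).const_mul ε
    rw [h.deriv]
    have : 0 < x ^ 2 + ε ^ 2 := by positivity
    field_simp
    ring
  refine ⟨⟨?_, fun x => ?_, fun x => ?_⟩, hder⟩
  · exact contDiff_const.mul (Real.contDiff_arctan.comp (contDiff_id.div_const ε))
  · rw [abs_mul, abs_of_pos hε, mul_comm]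
    refine mul_le_mul_of_nonneg_right (abs_le.2 ⟨?_, ?_⟩) hε.le
    · linarith [Real.neg_pi_div_two_lt_arctan (x / ε)]
    · exact (Real.arctan_lt_pi_div_two _).le
  · rw [hder, abs_of_nonneg (by positivity)]
    exact div_le_one_of_le₀ (by nlinarith [sq_nonneg x]) (by positivity)

lemma weight_le (x : ℝ) {ε : ℝ} (hε : 0 < ε) : |x / (x ^ 2 + ε ^ 2)| ≤ 1 / (2 * ε) := by
  have : 0 < x ^ 2 + ε ^ 2 := by positivity
  rw [abs_div, abs_of_pos this, div_le_div_iff₀ this (by positivity)]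
  nlinarith [sq_nonneg (|x| - ε), sq_abs x]

/-- The loss of the factor `(π/2)^(1/m)` in each induction step is absorbed by the growth of the
constant from `12 * m` to `12 * (m + 1)`, thanks to Bernoulli's inequality and `π/2 < 2`. -/
lemma mul_pi_rpow_le {m : ℕ} (hm : 0 < m) :
    5 + 12 * (m : ℝ) * (Real.pi / 2) ^ (1 / (m : ℝ)) ≤ 12 * (m + 1) := by
  have hm' : (1 : ℝ) ≤ m := by exact_mod_cast hm
  have h := rpow_one_add_le_one_add_mul_self (s := Real.pi / 2 - 1) (p := 1 / (m : ℝ))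
    (by linarith [Real.pi_pos]) (by positivity) ((div_le_one (by positivity)).2 hm')
  rw [add_sub_cancel] at h
  have h2 := mul_le_mul_of_nonneg_left h (by positivity : (0 : ℝ) ≤ 12 * m)
  have h3 : 12 * (m : ℝ) * (1 + 1 / (m : ℝ) * (Real.pi / 2 - 1)) =
      12 * m + 12 * (Real.pi / 2 - 1) := by field_simp
  linarith [Real.pi_lt_d2]

/-- The estimate for a nonempty list of coordinates in which to differentiate successively. -/
lemma list_bound {n d : ℕ} (hd : 0 < d) (L : List (Fin n)) : ∀ (i : Fin n)
    (f : MvPolynomial (Fin n) ℝ), f.totalDegree ≤ d →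
    (∀ x ∈ unitCube n, 1 ≤ |MvPolynomial.eval x
      ((i :: L).foldl (fun g j => MvPolynomial.pderiv j g) f)|) →
    ∀ (φ : ℝ → ℝ) (t : ℝ), 0 < t → IsTest φ t →
      |∫ x in unitCube n, deriv φ (MvPolynomial.eval x f)| ≤
        12 * d * ((L.length : ℝ) + 1) * t ^ (1 / ((L.length : ℝ) + 1)) := by
  have hd' : (1 : ℝ) ≤ d := by exact_mod_cast hd
  induction L with
  | nil =>
    intro i f hf h φ t ht hφ
    simp only [List.foldl_cons, List.foldl_nil] at h
    -- `ε = √t` makes the error term `ε² / (g² + ε²)` at most `t`.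
    have hε : 0 < √t := Real.sqrt_pos.2 ht
    have h1 := step_bound hd i hf hφ hε (M := 1) (fun x hx => by
      have h0 := h x hx
      rw [abs_div, abs_of_pos (by positivity : 0 < _ ^ 2 + √t ^ 2)]
      refine div_le_one_of_le₀ ?_ (by positivity)
      nlinarith [sq_abs (MvPolynomial.eval x (MvPolynomial.pderiv i f)), sq_nonneg √t])
    have h2 := norm_setIntegral_le_of_norm_le_const (μ := (volume : Measure (Fin n → ℝ)))
      (s := unitCube n) (C := t) (f := fun x => √t ^ 2 /
        (MvPolynomial.eval x (MvPolynomial.pderiv i f) ^ 2 + √t ^ 2))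
      isCompact_Icc.measure_lt_top (fun x hx => by
        have h0 := h x hx
        rw [Real.norm_eq_abs, abs_of_nonneg (by positivity), Real.sq_sqrt ht.le]
        refine div_le_self ht.le ?_
        nlinarith [sq_abs (MvPolynomial.eval x (MvPolynomial.pderiv i f))])
    rw [volume_unitCube, mul_one] at h2
    have h3 := (le_abs_self _).trans h2
    simp only [List.length_nil, Nat.cast_zero, zero_add, div_one, Real.rpow_one, mul_one]
    nlinarith
  | cons j L ih =>
    intro i f hf h φ t ht hφ
    set m : ℝ := (L.length : ℝ) + 1 with hm
    have hm0 : 0 < m := by positivity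
    have hlen : (((j :: L).length : ℕ) : ℝ) = m := by simp [hm]
    rw [hlen]
    -- This `ε` equalizes the two contributions: `t / ε = ε ^ (1 / m) = t ^ (1 / (m + 1))`.
    set ε : ℝ := t ^ (m / (m + 1)) with hε_def
    have hε : 0 < ε := Real.rpow_pos_of_pos ht _
    obtain ⟨hψ, hψ'⟩ := isTest_arctan hε
    have h1 := step_bound hd i hf hφ hε (fun x _ => weight_le _ hε)
    have h2 := ih j (MvPolynomial.pderiv i f) ((totalDegree_pderiv_le i f).trans hf) h _ _
      (by positivity) hψ
    simp only [hψ'] at h2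
    have h3 := (le_abs_self _).trans h2
    have hε1 : ε ^ (1 / m) = t ^ (1 / (m + 1)) := by
      rw [hε_def, ← Real.rpow_mul ht.le]
      congr 1
      field_simp
    have hε2 : t / ε = t ^ (1 / (m + 1)) := by
      rw [hε_def]
      nth_rw 1 [← Real.rpow_one t]
      rw [← Real.rpow_sub ht]
      congr 1
      field_simp
      ring
    rw [Real.mul_rpow (by positivity) hε.le, hε1] at h3
    have h4 : 10 * d * t * (1 / (2 * ε)) = 5 * d * t ^ (1 / (m + 1)) := by
      rw [← hε2]
      field_simp
      ring
    have h5 := mul_pi_rpow_le (Nat.succ_pos L.length)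
    have hc : ((L.length.succ : ℕ) : ℝ) = m := by simp [hm]
    rw [hc] at h5
    have h6 := mul_le_mul_of_nonneg_right h5
      (by positivity : 0 ≤ d * t ^ (1 / (m + 1)))
    rw [h4] at h1
    nlinarith

/-- A mixed derivative is a composition of `∑ k i` first-order derivatives. -/
lemma exists_list {n : ℕ} (k : Fin n → ℕ) : ∃ L : List (Fin n), L.length = ∑ i, k i ∧
    ∀ f : MvPolynomial (Fin n) ℝ,
      mixedPDeriv k f = L.foldl (fun g j => MvPolynomial.pderiv j g) f := by
  have hiter : ∀ (i : Fin n) (a : ℕ) (f : MvPolynomial (Fin n) ℝ),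
      (fun g' => MvPolynomial.pderiv i g')^[a] f =
        (List.replicate a i).foldr (fun j g => MvPolynomial.pderiv j g) f := by
    intro i a f
    induction a with
    | zero => rfl
    | succ a ih => rw [Function.iterate_succ_apply', ih, List.replicate_succ, List.foldr_cons]
  refine ⟨((List.ofFn fun i => List.replicate (k i) i).flatten).reverse, ?_, fun f => ?_⟩
  · simp [List.length_flatten, List.map_ofFn, List.sum_ofFn]
  · rw [List.foldl_reverse, List.foldr_flatten, mixedPDeriv]
    simp only [hiter]
    simp only [List.ofFn_eq_map, List.foldr_map]

/-- **Regularity under a lower bound on a mixed derivative on the cube.**  There is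
an absolute constant `C > 1` such that for every `n, k, d ∈ ℕ`, every
`k₁, …, k_n ∈ ℕ ∪ {0}` with `k = k₁ + ⋯ + k_n`, and every polynomial `f` of degree at
most `d` with `|∂^k f / ∂x₁^{k₁} ⋯ ∂x_n^{k_n}| ≥ 1` on `Qⁿ`, one has
`σ(μ_{Qⁿ}∘f⁻¹, t) ≤ C d k t^{1/k}` for all `t > 0`. -/
theorem cube_mixed_derivative :
    ∃ C : ℝ, 1 < C ∧ ∀ (n kk d : ℕ), 0 < n → 0 < kk → 0 < d →
      ∀ k : Fin n → ℕ, (∑ i, k i) = kk →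
      ∀ f : MvPolynomial (Fin n) ℝ, f.totalDegree ≤ d →
        (∀ x ∈ unitCube n, 1 ≤ |MvPolynomial.eval x (mixedPDeriv k f)|) →
      ∀ t : ℝ, 0 < t →
        sigmaMod (Measure.map (fun x => MvPolynomial.eval x f) (cubeMeasure n)) t ≤
          C * d * kk * t ^ (1 / (kk : ℝ)) := by
  refine ⟨12, by norm_num, fun n kk d _ hkk hd k hk f hf h t ht => ?_⟩
  obtain ⟨L, hL, hLf⟩ := exists_list k
  rw [hk] at hL
  obtain _ | ⟨i, L⟩ := L
  · simp at hL
    omega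
  refine Real.sSup_le ?_ (by positivity)
  rintro y ⟨φ, hφ, hφt, hφ1, rfl⟩
  have hC1 : ContDiff ℝ 1 φ := hφ.1.of_le (by exact_mod_cast le_top)
  rw [hLf] at h
  have := list_bound hd L i f hf h φ t ht ⟨hC1, hφt, hφ1⟩
  have hc : (L.length : ℝ) + 1 = kk := by
    rw [← hL]
    simp
  rw [hc] at this
  rw [integral_map (MvPolynomial.continuous_eval f).measurable.aemeasurable
    (hC1.continuous_deriv le_rfl).aestronglyMeasurable]
  exact (le_abs_self _).trans this
end
end

section
/- There exists an absolute constant C > 0 such that for all d, n ∈ ℕ and every non-constant polynomial f ∈ 𝒫_d(ℝⁿ), one has σ(μ_{Qⁿ} ∘ f⁻¹, t) ≤ C · min{d, n} · [f]₂^{−1/d} · t^{1/d} for all t > 0. -/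
/-!
Write `χ` for the indicator of the negative half-line. After subtracting a constant `c`, chosen so
that the positive and the negative parts of `f - c` have the same `L²` norm, the integral of `φ'(f)`
splits into two integrals of the form `∫ ψ'(p) χ(p)`, with `p = f - c` or `p = c - f`. It suffices to
bound such an integral by `min d n * t ^ (1/d) * ‖max (p, t)‖₂ ^ (-1/d)` (`half_estimate`) and to bound
`‖f - c‖₂` from below by `16 ^ (-d) * [f]₂` (`leadingL2_le_dist`).

*Rays.* On a ray `r ↦ y + r (y - x)` the function `p` is a polynomial `g` in one variable with
`g (-1) = p x`. If `p x` is large, then `|∫₀^ρ ψ'(g) χ(g)|` is at most a constant, independent of `d`,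
times `(t / p x) ^ (1/d)` (`one_dim_half`): either `g` stays positive on `[0, ρ]`, or it has to drop
from `p x` to `0`, so `g'` is large somewhere, hence by a Remez inequality (Lagrange interpolation at
well spaced nodes) on most of `[0, 1]`; there one integrates by parts on at most `5 d` intervals.
The fact that rays start on the opposite side of `y` from a point with large `p` is what turns the
`L²` norm of `p` into oscillation everywhere.

*Transport.* It remains to write the uniform measure as a mixture of such rays whose points `x` are
distributed with density proportional to `β = max (p, t)²`. Let `T` be the triangular transport of
`β` to the uniform measure. For every `r` the map `x ↦ T x + r (T x - x)` covers the cube, and the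
substitution `z = T x + r (T x - x)`, done one coordinate at a time, gives
`|∫₀^R ∫ h dz dr| ≤ ∫ β(x) / Z * Θ(x) dx`, where `Θ(x)` bounds the integrals along rays pointing away
from `x` with a weight `exp (a r)`, `a ≤ min (log (β / Z), n)`, `Z = ∫ β` (`transport_cube`).
Jacobians enter through antitone factors in `[0, 1]`, which are harmless by
`antitone_weight`. With `R = 1 / (2 min d n)` the exponential weight is at most
`2 + (β / Z) ^ (1 / (2 d))`, and integrating `(t / max (p, t)) ^ (1/d)` against it gives
`half_estimate`, the factor `min d n` being `1 / R` up to a constant.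

*Lower bound for the `L²` norm.* The coefficients of top degree are, up to factors of size at least
`16 ^ (-d)`, the Fourier coefficients of `f - c` with respect to products of orthonormal polynomials
in one variable, and Bessel's inequality applies (`sum_top_sq_le`).
-/

open MeasureTheory

noncomputable section

/-- `[f]₂`: the `ℓ²`-norm of the coefficients of the leading (top-degree) part of `f`. -/
def leadingL2 {n : ℕ} (f : MvPolynomial (Fin n) ℝ) : ℝ :=
  Real.sqrt (∑ u ∈ f.support.filter fun u => (u.sum fun _ e => e) = f.totalDegree,
    f.coeff u ^ 2)

namespace CubeReg

/-! ### Weighted integrals on a half-line -/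

/-- A bound on all the primitives `∫₀^ρ H` also bounds the integrals of `H` over the intersections
of `(0, ρ]` with lower sets: these are again initial segments. -/
lemma enorm_setIntegral_initial {H : ℝ → ℝ} {R : ℝ} {B : ENNReal}
    (h : ∀ ρ ∈ Set.Icc 0 R, ‖∫ r in Set.Ioc 0 ρ, H r‖ₑ ≤ B) {ρ : ℝ} (hρ : ρ ∈ Set.Icc 0 R)
    {S : Set ℝ} (hS : ∀ x ∈ S, ∀ y, y ≤ x → y ∈ S) :
    ‖∫ r in Set.Ioc 0 ρ ∩ S, H r‖ₑ ≤ B := by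
  have h0 : (0:ℝ) ∈ Set.Icc 0 R := ⟨le_rfl, hρ.1.trans hρ.2⟩
  by_cases hne : (Set.Ioc 0 ρ ∩ S).Nonempty
  · obtain ⟨w, hw⟩ := hne
    have hbdd : BddAbove (Set.Ioc 0 ρ ∩ S) := ⟨ρ, fun x hx => hx.1.2⟩
    set s := sSup (Set.Ioc 0 ρ ∩ S) with hs
    have hws : w ≤ s := le_csSup hbdd hw
    have hsρ : s ≤ ρ := csSup_le ⟨w, hw⟩ fun x hx => hx.1.2
    have e : (Set.Ioc 0 ρ ∩ S : Set ℝ) =ᵐ[volume] Set.Ioc 0 s := by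
      have h1 : (Set.Ioo 0 s : Set ℝ) ⊆ Set.Ioc 0 ρ ∩ S := by
        intro x hx
        obtain ⟨y, hy, hxy⟩ := exists_lt_of_lt_csSup ⟨w, hw⟩ hx.2
        exact ⟨⟨hx.1, hx.2.le.trans hsρ⟩, hS y hy.2 x hxy.le⟩
      have h2 : (Set.Ioc 0 ρ ∩ S : Set ℝ) ⊆ Set.Ioc 0 s := fun x hx => ⟨hx.1.1, le_csSup hbdd hx⟩
      have h3 : (Set.Ioo 0 s : Set ℝ) =ᵐ[volume] Set.Ioc 0 s := Ioo_ae_eq_Ioc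
      filter_upwards [h3] with x hx
      apply propext
      constructor
      · exact fun k => h2 k
      · intro k
        have : (Set.Ioo 0 s) x := by rw [hx]; exact k
        exact h1 this
    rw [setIntegral_congr_set e]
    exact h s ⟨hw.1.1.le.trans hws, hsρ.trans hρ.2⟩
  · rw [Set.not_nonempty_iff_eq_empty.mp hne]
    simp

/-- Multiplying by an antitone weight with values in `[0, 1]` does not increase the largest
primitive: the weight is an average of indicators of initial segments. -/
lemma antitone_weight {H m : ℝ → ℝ} {R : ℝ} {B : ENNReal}
    (hH : IntegrableOn H (Set.Icc 0 R)) (hm : AntitoneOn m (Set.Icc 0 R))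
    (hm0 : ∀ r ∈ Set.Icc 0 R, 0 ≤ m r) (hm1 : ∀ r ∈ Set.Icc 0 R, m r ≤ 1)
    (h : ∀ ρ ∈ Set.Icc 0 R, ‖∫ r in Set.Ioc 0 ρ, H r‖ₑ ≤ B) {ρ : ℝ} (hρ : ρ ∈ Set.Icc 0 R) :
    ‖∫ r in Set.Ioc 0 ρ, H r * m r‖ₑ ≤ B := by
  -- `k` extends `m` to an antitone function on the whole line, so that its superlevel sets are lower
  -- sets
  set k : ℝ → ℝ := fun r => m (max 0 (min r R)) with hk
  have hR : 0 ≤ R := hρ.1.trans hρ.2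
  have hmem : ∀ r, max 0 (min r R) ∈ Set.Icc 0 R := fun r =>
    ⟨le_max_left _ _, max_le hR (min_le_right _ _)⟩
  have hka : Antitone k := fun r s hrs =>
    hm (hmem r) (hmem s) (max_le_max le_rfl (min_le_min hrs le_rfl))
  have hkm : Measurable k := hka.measurable
  have hsub : Set.Ioc 0 ρ ⊆ Set.Icc 0 R := fun x hx => ⟨hx.1.le, hx.2.trans hρ.2⟩
  have hkeq : ∀ r ∈ Set.Icc 0 R, k r = m r := by
    intro r hr
    simp only [hk]
    rw [min_eq_left hr.2, max_eq_right hr.1]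
  have hHρ : Integrable H (volume.restrict (Set.Ioc 0 ρ)) := hH.mono_set hsub
  have hmeasS : MeasurableSet {p : ℝ × ℝ | p.2 < k p.1} :=
    measurableSet_lt measurable_snd (hkm.comp measurable_fst)
  -- layer-cake representation of the weight
  have e1 : ∫ r in Set.Ioc 0 ρ, H r * m r =
      ∫ r in Set.Ioc 0 ρ, ∫ l in Set.Ioc (0:ℝ) 1, H r * ({p : ℝ × ℝ | p.2 < k p.1}.indicator 1 (r, l)) := by
    refine setIntegral_congr_fun measurableSet_Ioc fun r hr => ?_
    have hr' := hsub hr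
    rw [integral_const_mul, ← hkeq r hr']
    congr 1
    have : ∀ l : ℝ, ({p : ℝ × ℝ | p.2 < k p.1}.indicator (1 : ℝ × ℝ → ℝ) (r, l)) =
        (Set.Iio (k r)).indicator (1 : ℝ → ℝ) l := fun l => by
      simp [Set.indicator]
    simp_rw [this]
    rw [integral_indicator_one measurableSet_Iio, measureReal_restrict_apply measurableSet_Iio]
    have : (volume : Measure ℝ) (Set.Iio (k r) ∩ Set.Ioc 0 1) = volume (Set.Ioo 0 (k r)) := by
      have h1 : k r ≤ 1 := hkeq r hr' ▸ hm1 r hr'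
      congr 1
      ext x
      simp only [Set.mem_inter_iff, Set.mem_Iio, Set.mem_Ioc, Set.mem_Ioo]
      constructor
      · rintro ⟨a, b, c⟩; exact ⟨b, a⟩
      · rintro ⟨a, b⟩; exact ⟨b, a, by linarith⟩
    rw [Measure.real, this]
    simp
    rw [hkeq r hr', ENNReal.toReal_ofReal (hm0 r hr')]
  rw [e1, integral_integral_swap]
  · refine (enorm_integral_le_lintegral_enorm _).trans ?_
    have : ∀ l : ℝ, ‖∫ r in Set.Ioc 0 ρ, H r * ({p : ℝ × ℝ | p.2 < k p.1}.indicator 1 (r, l))‖ₑ ≤ B := by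
      intro l
      have hms : MeasurableSet {r | l < k r} := measurableSet_lt measurable_const hkm
      have : ∀ r, H r * ({p : ℝ × ℝ | p.2 < k p.1}.indicator (1 : ℝ × ℝ → ℝ) (r, l)) =
         {r | l < k r}.indicator H r := fun r => by
        by_cases hh : l < k r <;> simp [Set.indicator, hh]
      simp_rw [this]
      rw [setIntegral_indicator hms]
      exact enorm_setIntegral_initial h hρ fun x hx y hy => lt_of_lt_of_le hx (hka hy)
    refine (lintegral_mono this).trans ?_
    simp
  · have i1 : Integrable (fun p : ℝ × ℝ => H p.1)
        ((volume.restrict (Set.Ioc 0 ρ)).prod (volume.restrict (Set.Ioc 0 1))) :=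
      hHρ.comp_fst _
    refine i1.mono (i1.aestronglyMeasurable.mul
      ((measurable_one.indicator hmeasS).aestronglyMeasurable)) ?_
    refine Filter.Eventually.of_forall fun p => ?_
    obtain ⟨r, l⟩ := p
    by_cases hp : l < k r <;> simp [Set.indicator, hp]

/-- Exponential weights. For `c ≤ 0` the weight is antitone; for `c ≥ 0` it is `exp (R c)` times
`1 - (1 - exp (c (r - R)))`, a difference of two antitone weights with values in `[0, 1]`. -/
lemma exp_weight {H : ℝ → ℝ} {R : ℝ} {B : ENNReal} (hH : IntegrableOn H (Set.Icc 0 R))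
    (h : ∀ ρ ∈ Set.Icc 0 R, ‖∫ r in Set.Ioc 0 ρ, H r‖ₑ ≤ B) (c : ℝ)
    {ρ : ℝ} (hρ : ρ ∈ Set.Icc 0 R) :
    ‖∫ r in Set.Ioc 0 ρ, H r * Real.exp (c * r)‖ₑ ≤
      ENNReal.ofReal (2 * Real.exp (R * max c 0)) * B := by
  have hR : 0 ≤ R := hρ.1.trans hρ.2
  rcases le_total c 0 with hc | hc
  · refine (antitone_weight (m := fun r => Real.exp (c * r)) hH ?_ (fun _ _ => (Real.exp_pos _).le) ?_ h hρ).trans ?_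
    · intro r _ s _ hrs
      exact Real.exp_le_exp.2 (mul_le_mul_of_nonpos_left hrs hc)
    · intro r hr
      exact Real.exp_le_one_iff.2 (mul_nonpos_of_nonpos_of_nonneg hc hr.1)
    · rw [max_eq_right hc]
      simp only [mul_zero, Real.exp_zero, mul_one]
      calc B = 1 * B := (one_mul B).symm
        _ ≤ _ := by gcongr; simp
  · rw [max_eq_left hc]
    have hsub : Set.Ioc 0 ρ ⊆ Set.Icc 0 R := fun x hx => ⟨hx.1.le, hx.2.trans hρ.2⟩
    have hHρ : Integrable H (volume.restrict (Set.Ioc 0 ρ)) := hH.mono_set hsub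
    have hm := antitone_weight (m := fun r => 1 - Real.exp (c * (r - R))) hH ?_ ?_ ?_ h hρ
    · have hi : IntegrableOn (fun r => H r * (1 - Real.exp (c * (r - R)))) (Set.Ioc 0 ρ) := by
        refine (hHρ.mul_bdd (c := 1) (by fun_prop) ?_)
        refine (ae_restrict_iff' measurableSet_Ioc).2 (Filter.Eventually.of_forall fun r hr => ?_)
        have h1 : Real.exp (c * (r - R)) ≤ 1 := Real.exp_le_one_iff.2
          (mul_nonpos_of_nonneg_of_nonpos hc (by linarith [(hsub hr).2]))
        rw [Real.norm_eq_abs, abs_le]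
        constructor <;> linarith [Real.exp_pos (c * (r - R))]
      have e : ∫ r in Set.Ioc 0 ρ, H r * Real.exp (c * r) =
          Real.exp (R * c) * ((∫ r in Set.Ioc 0 ρ, H r) -
            ∫ r in Set.Ioc 0 ρ, H r * (1 - Real.exp (c * (r - R)))) := by
        rw [← integral_sub hHρ hi, ← integral_const_mul]
        congr 1
        ext r
        have : Real.exp (c * r) = Real.exp (R * c) * Real.exp (c * (r - R)) := by
          rw [← Real.exp_add]; ring_nf
        rw [this]; ring
      rw [e, enorm_mul]
      have : ‖Real.exp (R * c)‖ₑ = ENNReal.ofReal (Real.exp (R * c)) := Real.enorm_of_nonneg (Real.exp_pos _).le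
      rw [this, mul_comm 2, ENNReal.ofReal_mul (Real.exp_pos _).le, mul_assoc]
      gcongr
      refine enorm_sub_le.trans ?_
      calc _ ≤ B + B := add_le_add (h ρ hρ) hm
        _ = _ := by rw [← two_mul]; simp
    · intro r _ s _ hrs
      have := Real.exp_le_exp.2 (mul_le_mul_of_nonneg_left (sub_le_sub_right hrs R) hc)
      linarith
    · intro r hr
      have h1 : Real.exp (c * (r - R)) ≤ 1 := Real.exp_le_one_iff.2
          (mul_nonpos_of_nonneg_of_nonpos hc (by linarith [hr.2]))
      linarith
    · intro r _
      linarith [Real.exp_pos (c * (r - R))]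

/-! ### Transport on an interval -/

/-- The points of `(-1/2, 1/2]` at which `u` exceeds all its earlier values. -/
def recordSet (u : ℝ → ℝ) : Set ℝ :=
  {x | x ∈ Set.Ioc (-(1/2) : ℝ) (1/2) ∧ ∀ x' ∈ Set.Ico (-(1/2) : ℝ) x, u x' < u x}

lemma recordSet_injOn (u : ℝ → ℝ) : Set.InjOn u (recordSet u) := by
  intro x hx y hy hxy
  by_contra hne
  rcases lt_or_gt_of_ne hne with h | h
  · exact absurd hxy (hy.2 x ⟨hx.1.1.le, h⟩).ne
  · exact absurd hxy (hx.2 y ⟨hy.1.1.le, h⟩).ne'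

/-- Every value is attained for the first time at a record point, so `u` maps its record set onto
the interval. -/
lemma subset_image_recordSet {u : ℝ → ℝ} (hu : Continuous u) (h0 : u (-(1/2)) = -(1/2))
    (h1 : u (1/2) = 1/2) : Set.Ioc (-(1/2) : ℝ) (1/2) ⊆ u '' recordSet u := by
  intro y hy
  set A : Set ℝ := Set.Icc (-(1/2)) (1/2) ∩ {x | y ≤ u x} with hA
  have hAc : IsCompact A := isCompact_Icc.inter_right (isClosed_le continuous_const hu)
  have hne : A.Nonempty := ⟨1/2, ⟨by norm_num, by norm_num⟩, by
    show y ≤ u (1/2); rw [h1]; exact hy.2⟩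
  obtain ⟨x, hx, hmin⟩ := hAc.exists_isLeast hne
  have hxy : y ≤ u x := hx.2
  have hlt : ∀ x' ∈ Set.Ico (-(1/2) : ℝ) x, u x' < y := by
    intro x' hx'
    by_contra hcon
    exact absurd (hmin ⟨⟨hx'.1, hx'.2.le.trans hx.1.2⟩, not_lt.1 hcon⟩) (not_le.2 hx'.2)
  have hxl : -(1/2) < x := by
    rcases hx.1.1.lt_or_eq with h | h
    · exact h
    · rw [← h, h0] at hxy
      exact absurd hy.1 (not_lt.2 hxy)
  refine ⟨x, ⟨⟨hxl, hx.1.2⟩, fun x' hx' => (hlt x' hx').trans_le hxy⟩, ?_⟩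
  have : y ∈ u '' Set.Icc (-(1/2)) x :=
    intermediate_value_Icc hxl.le hu.continuousOn ⟨by rw [h0]; exact hy.1.le, hxy⟩
  obtain ⟨z, hz, hzy⟩ := this
  rcases hz.2.lt_or_eq with h | h
  · exact absurd hzy (hlt z ⟨hz.1, h⟩).ne
  · rw [← h, hzy]

lemma deriv_nonneg_of_mem_recordSet {u : ℝ → ℝ} {u' x : ℝ} (hu : HasDerivAt u u' x)
    (hx : x ∈ recordSet u) : 0 ≤ u' := by
  have h1 : Filter.Tendsto (slope u x) (nhdsWithin x (Set.Iio x)) (nhds u') :=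
    (hasDerivAt_iff_tendsto_slope.1 hu).mono_left (nhdsWithin_mono _ fun y hy => ne_of_lt hy)
  refine ge_of_tendsto h1 ?_
  have : Set.Ioo (-(1/2)) x ∈ nhdsWithin x (Set.Iio x) := Ioo_mem_nhdsLT hx.1.1
  filter_upwards [this] with y hy
  rw [slope_def_field]
  exact div_nonneg_of_nonpos (sub_nonpos.2 (hx.2 y ⟨hy.1.le, hy.2⟩).le) (sub_nonpos.2 hy.2.le)

lemma measurableSet_recordSet_prod {u : ℝ → ℝ → ℝ} (hu : Continuous (Function.uncurry u)) :
    MeasurableSet {p : ℝ × ℝ | p.2 ∈ recordSet (u p.1)} := by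
  have hcl : ∀ q : ℝ, IsClosed {p : ℝ × ℝ | ∃ x' ∈ Set.Icc (-(1/2)) q, u p.1 p.2 ≤ u p.1 x'} := by
    intro q
    have hc : IsClosed {w : (Set.Icc (-(1/2) : ℝ) q) × (ℝ × ℝ) | u w.2.1 w.2.2 ≤ u w.2.1 w.1} := by
      refine isClosed_le (hu.comp (continuous_snd)) ?_
      exact hu.comp ((continuous_fst.comp continuous_snd).prodMk
        (continuous_subtype_val.comp continuous_fst))
    have := isClosedMap_snd_of_compactSpace _ hc
    convert this using 1
    ext p
    simp
  have e : {p : ℝ × ℝ | p.2 ∈ recordSet (u p.1)} = (Prod.snd ⁻¹' Set.Ioc (-(1/2) : ℝ) (1/2)) \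
      ⋃ q : ℚ, ({p : ℝ × ℝ | (q : ℝ) < p.2} ∩
        {p : ℝ × ℝ | ∃ x' ∈ Set.Icc (-(1/2)) (q : ℝ), u p.1 p.2 ≤ u p.1 x'}) := by
    ext p
    simp only [recordSet, Set.mem_ofPred_eq, Set.mem_sdiff, Set.mem_preimage, Set.mem_iUnion,
      Set.mem_inter_iff, not_exists]
    refine and_congr_right fun _ => ⟨?_, ?_⟩
    · rintro h q ⟨hq, x', hx', hle⟩
      exact absurd (h x' ⟨hx'.1, hx'.2.trans_lt hq⟩) (not_lt.2 hle)
    · intro h x' hx'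
      by_contra hcon
      obtain ⟨q, hq1, hq2⟩ := exists_rat_btwn hx'.2
      exact h q ⟨hq2, x', ⟨hx'.1, hq1.le⟩, not_lt.1 hcon⟩
  rw [e]
  refine (measurable_snd measurableSet_Ioc).diff (MeasurableSet.iUnion fun q => ?_)
  exact (measurableSet_lt measurable_const measurable_snd).inter (hcl q).measurableSet

/-- Change of variables along a map `u` that fixes both endpoints of the interval but need not be
monotone: `u` is a bijection, up to an endpoint, from its record set onto the interval, and its
derivative is nonnegative there. -/
lemma integral_eq_integral_recordSet {u u' : ℝ → ℝ} (hu : ∀ x, HasDerivAt u (u' x) x)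
    (hms : MeasurableSet (recordSet u)) (h0 : u (-(1/2)) = -(1/2))
    (h1 : u (1/2) = 1/2) {G : ℝ → ℝ} (hG : ∀ z, z ∉ Set.Icc (-(1/2) : ℝ) (1/2) → G z = 0) :
    ∫ z in Set.Icc (-(1/2) : ℝ) (1/2), G z = ∫ x in recordSet u, u' x * G (u x) := by
  have hc : Continuous u := continuous_iff_continuousAt.2 fun x => (hu x).continuousAt
  have e1 := integral_image_eq_integral_abs_deriv_smul hms (fun x _ => (hu x).hasDerivWithinAt)
    (recordSet_injOn u) G
  have e2 : ∫ x in recordSet u, |u' x| • G (u x) = ∫ x in recordSet u, u' x * G (u x) := by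
    refine setIntegral_congr_fun hms fun x hx => ?_
    simp only [smul_eq_mul]
    rw [abs_of_nonneg (deriv_nonneg_of_mem_recordSet (hu x) hx)]
  rw [← e2, ← e1, integral_Icc_eq_integral_Ioc]
  symm
  refine setIntegral_eq_of_subset_of_ae_sdiff_eq_zero
    (hms.image_of_continuousOn_injOn hc.continuousOn (recordSet_injOn u)).nullMeasurableSet
    (subset_image_recordSet hc h0 h1) ?_
  have : ∀ᵐ x : ℝ, x ≠ -(1/2) := by simp [ae_iff]
  filter_upwards [this] with x hx hx2
  refine hG x fun hx3 => hx2.2 ⟨lt_of_le_of_ne hx3.1 (Ne.symm hx), hx3.2⟩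

/-- One-dimensional transport estimate. Let `F` be the map that transports the density `b` to the
uniform one. For each `r` the integral of `H r` is computed by the substitution
`z = F x + r (F x - x)`, restricted to its record set. After exchanging the integrals, each `x`
contributes an integral along the ray from `F x` pointing away from `x`, with the weight
`b x (1 + r a)`, `a = 1 - 1 / b x`; compared with `b x * exp (r a)` this weight is antitone in
`r`. -/
lemma transport_one {b : ℝ → ℝ} (hb : Continuous b) (hpos : ∀ x, 0 < b x)
    (hb_int : ∫ x in Set.Icc (-(1/2) : ℝ) (1/2), b x = 1) {R : ℝ} {H : ℝ → ℝ → ℝ}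
    (hHm : Measurable (Function.uncurry H)) (hH1 : ∀ r z, |H r z| ≤ 1)
    (hH0 : ∀ r z, z ∉ Set.Icc (-(1/2) : ℝ) (1/2) → H r z = 0) {Θ : ℝ → ℝ → ENNReal}
    (hyp : ∀ x ∈ Set.Icc (-(1/2) : ℝ) (1/2), ∀ y ∈ Set.Icc (-(1/2) : ℝ) (1/2), ∀ c : ℝ,
      ∀ ρ ∈ Set.Icc 0 R,
        ‖∫ r in Set.Ioc 0 ρ, H r (y + r * (y - x)) * Real.exp (c * r)‖ₑ ≤ Θ x c)
    (c : ℝ) {ρ : ℝ} (hρ : ρ ∈ Set.Icc 0 R) :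
    ‖∫ r in Set.Ioc 0 ρ, (∫ z in Set.Icc (-(1/2) : ℝ) (1/2), H r z) * Real.exp (c * r)‖ₑ ≤
      ∫⁻ x in Set.Icc (-(1/2) : ℝ) (1/2), ENNReal.ofReal (b x) * Θ x (c + (1 - 1 / b x)) := by
  set F : ℝ → ℝ := fun x => -(1/2) + ∫ t in (-(1/2))..x, b t with hF
  have hFd : ∀ x, HasDerivAt F (b x) x := fun x => by
    have := (intervalIntegral.integral_hasDerivAt_right (hb.intervalIntegrable (-(1/2)) x)
      (hb.stronglyMeasurableAtFilter _ _) hb.continuousAt).const_add (-(1/2))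
    exact this
  have hFc : Continuous F := continuous_iff_continuousAt.2 fun x => (hFd x).continuousAt
  have hF0 : F (-(1/2)) = -(1/2) := by simp [hF]
  have hF1 : F (1/2) = 1/2 := by
    simp only [hF]
    rw [intervalIntegral.integral_of_le (by norm_num), ← integral_Icc_eq_integral_Ioc, hb_int]
    norm_num
  have hFm : StrictMono F := strictMono_of_deriv_pos fun x => by
    rw [(hFd x).deriv]; exact hpos x
  -- the point with parameter `r` on the ray from `F x` pointing away from `x`
  set u : ℝ → ℝ → ℝ := fun r x => F x + r * (F x - x) with hu
  have huc : Continuous (Function.uncurry u) := by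
    simp only [hu, Function.uncurry_def]
    fun_prop
  have hud : ∀ r x, HasDerivAt (u r) (b x + r * (b x - 1)) x := fun r x =>
    (hFd x).add (((hFd x).sub (hasDerivAt_id x)).const_mul r)
  have hu0 : ∀ r, u r (-(1/2)) = -(1/2) := fun r => by simp only [hu, hF0]; ring
  have hu1 : ∀ r, u r (1/2) = 1/2 := fun r => by simp only [hu, hF1]; ring
  set S : Set (ℝ × ℝ) := {p : ℝ × ℝ | p.2 ∈ recordSet (u p.1)} with hS
  have hSm : MeasurableSet S := measurableSet_recordSet_prod huc
  have hSr : ∀ r, MeasurableSet (recordSet (u r)) := fun r =>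
    (measurable_prodMk_left (x := r)) hSm
  set J : Set ℝ := Set.Icc (-(1/2) : ℝ) (1/2) with hJ
  have hSJ : ∀ r, recordSet (u r) ⊆ J := fun r x hx => Set.Ioc_subset_Icc_self hx.1
  -- the sets of record points shrink as `r` grows
  have hanti : ∀ r s, 0 ≤ r → r ≤ s → recordSet (u s) ⊆ recordSet (u r) := by
    intro r s hr hrs x hx
    refine ⟨hx.1, fun x' hx' => ?_⟩
    have h1 := hx.2 x' hx'
    have h2 := hFm hx'.2
    have h3 := hx'.2
    simp only [hu] at h1 ⊢
    rcases hr.lt_or_eq with hr | hr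
    · by_contra hcon
      push Not at hcon
      nlinarith
    · subst hr; linarith
  -- the integrand after the substitution `z = u r x`
  set g : ℝ → ℝ → ℝ := fun r x => S.indicator (fun p => (b p.2 + p.1 * (b p.2 - 1)) *
    H p.1 (u p.1 p.2) * Real.exp (c * p.1)) (r, x) with hg
  have hgm : Measurable (Function.uncurry g) := by
    refine Measurable.indicator ?_ hSm
    refine Measurable.mul (Measurable.mul ?_ ?_) ?_
    · have : Continuous fun p : ℝ × ℝ => b p.2 + p.1 * (b p.2 - 1) := by fun_prop
      exact this.measurable
    · exact hHm.comp (measurable_fst.prodMk huc.measurable)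
    · have : Continuous fun p : ℝ × ℝ => Real.exp (c * p.1) := by fun_prop
      exact this.measurable
  have hgi : Integrable (Function.uncurry g)
      ((volume.restrict (Set.Ioc 0 ρ)).prod (volume.restrict J)) := by
    have hc : Continuous fun p : ℝ × ℝ => (b p.2 + p.1 * (b p.2 - 1)) * Real.exp (c * p.1) := by
      fun_prop
    obtain ⟨M, hM⟩ := (isCompact_Icc.prod isCompact_Icc :
      IsCompact (Set.Icc 0 ρ ×ˢ J)).exists_bound_of_continuousOn hc.continuousOn
    refine Integrable.of_bound hgm.aestronglyMeasurable M ?_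
    rw [Measure.prod_restrict]
    refine (ae_restrict_iff' (measurableSet_Ioc.prod measurableSet_Icc)).2
      (Filter.Eventually.of_forall fun p hp => ?_)
    have hMp := hM p ⟨Set.Ioc_subset_Icc_self hp.1, hp.2⟩
    simp only [hg, Function.uncurry_def]
    by_cases hpS : p ∈ S
    · rw [Set.indicator_of_mem hpS]
      calc ‖_‖ = ‖(b p.2 + p.1 * (b p.2 - 1)) * Real.exp (c * p.1)‖ * |H p.1 (u p.1 p.2)| := by
            rw [← Real.norm_eq_abs, ← norm_mul]; ring_nf
        _ ≤ ‖(b p.2 + p.1 * (b p.2 - 1)) * Real.exp (c * p.1)‖ * 1 := by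
            gcongr; exact hH1 _ _
        _ ≤ M := by rw [mul_one]; exact hMp
    · rw [Set.indicator_of_notMem hpS, norm_zero]
      exact (norm_nonneg _).trans hMp
  have e1 : ∫ r in Set.Ioc 0 ρ, (∫ z in J, H r z) * Real.exp (c * r) =
      ∫ r in Set.Ioc 0 ρ, ∫ x in J, g r x := by
    refine setIntegral_congr_fun measurableSet_Ioc fun r hr => ?_
    rw [integral_eq_integral_recordSet (hud r) (hSr r) (hu0 r) (hu1 r) (hH0 r),
      ← integral_mul_const]
    have : ∀ x, g r x = (recordSet (u r)).indicator (fun x => (b x + r * (b x - 1)) *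
        H r (u r x) * Real.exp (c * r)) x := fun x => rfl
    simp_rw [this]
    rw [setIntegral_indicator (hSr r), Set.inter_eq_self_of_subset_right (hSJ r)]
  rw [e1, integral_integral_swap hgi]
  refine (enorm_integral_le_lintegral_enorm _).trans ?_
  refine setLIntegral_mono' measurableSet_Icc fun x hx => ?_
  have hFx : F x ∈ J := ⟨hF0 ▸ hFm.monotone hx.1, hF1 ▸ hFm.monotone hx.2⟩
  set a : ℝ := 1 - 1 / b x with ha
  have hba : b x * a = b x - 1 := by rw [ha]; field_simp [(hpos x).ne']
  -- the Jacobian `b x (1 + r a)` relative to `b x * exp (r a)`, cut off at the first `r` for which `x`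
  -- is not a record point
  set m : ℝ → ℝ := fun r => S.indicator (fun p => (1 + p.1 * a) * Real.exp (-(p.1 * a))) (r, x)
    with hm
  have e2 : ∫ r in Set.Ioc 0 ρ, g r x = b x * ∫ r in Set.Ioc 0 ρ,
      (H r (F x + r * (F x - x)) * Real.exp ((c + a) * r)) * m r := by
    rw [← integral_const_mul]
    congr 1
    ext r
    simp only [hg, hm]
    by_cases hpS : (r, x) ∈ S
    · rw [Set.indicator_of_mem hpS, Set.indicator_of_mem hpS]
      simp only
      have : Real.exp (c * r) = Real.exp ((c + a) * r) * Real.exp (-(r * a)) := by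
        rw [← Real.exp_add]; ring_nf
      rw [this]
      have : b x + r * (b x - 1) = b x * (1 + r * a) := by rw [← hba]; ring
      rw [this]
      ring
    · rw [Set.indicator_of_notMem hpS, Set.indicator_of_notMem hpS]
      ring
  rw [e2, enorm_mul, Real.enorm_of_nonneg (hpos x).le]
  gcongr
  have hmS : ∀ r, 0 ≤ r → (r, x) ∈ S → 0 ≤ 1 + r * a := by
    intro r hr hrS
    have := deriv_nonneg_of_mem_recordSet (hud r x) hrS
    have h2 : b x + r * (b x - 1) = b x * (1 + r * a) := by rw [← hba]; ring
    rw [h2] at this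
    exact nonneg_of_mul_nonneg_right this (hpos x)
  refine antitone_weight (R := R) ?_ ?_ ?_ ?_ (fun ρ' hρ' => hyp x hx (F x) hFx (c + a) ρ' hρ') hρ
  · have hc : Continuous fun r : ℝ => Real.exp ((c + a) * r) := by fun_prop
    have h1 : IntegrableOn (fun r : ℝ => Real.exp ((c + a) * r)) (Set.Icc 0 R) :=
      hc.integrableOn_Icc
    refine Integrable.bdd_mul (c := 1) h1 ?_ ?_
    · refine Measurable.aestronglyMeasurable ?_
      exact hHm.comp (measurable_id.prodMk (by fun_prop))
    · exact Filter.Eventually.of_forall fun r => hH1 _ _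
  · intro r hr s hs hrs
    simp only [hm]
    by_cases hsS : (s, x) ∈ S
    · have hrS : (r, x) ∈ S := hanti r s hr.1 hrs hsS
      rw [Set.indicator_of_mem hsS, Set.indicator_of_mem hrS]
      simp only
      have h1 := hmS r hr.1 hrS
      -- the difference of the two sides of `h3` is `r (s - r) a ^ 2`
      have h2 : 1 + s * a ≤ (1 + r * a) * Real.exp ((s - r) * a) := by
        have := Real.add_one_le_exp ((s - r) * a)
        have h3 : 1 + s * a ≤ (1 + r * a) * ((s - r) * a + 1) := by
          nlinarith [mul_nonneg (mul_nonneg hr.1 (sub_nonneg.2 hrs)) (sq_nonneg a)]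
        exact h3.trans (mul_le_mul_of_nonneg_left this h1)
      calc (1 + s * a) * Real.exp (-(s * a)) ≤
          ((1 + r * a) * Real.exp ((s - r) * a)) * Real.exp (-(s * a)) := by gcongr
        _ = _ := by rw [mul_assoc, ← Real.exp_add]; ring_nf
    · rw [Set.indicator_of_notMem hsS]
      refine Set.indicator_apply_nonneg fun hrS => ?_
      exact mul_nonneg (hmS r hr.1 hrS) (Real.exp_pos _).le
  · intro r hr
    exact Set.indicator_apply_nonneg fun hrS => mul_nonneg (hmS r hr.1 hrS) (Real.exp_pos _).le
  · intro r hr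
    refine Set.indicator_apply_le' (fun hrS => ?_) fun _ => zero_le_one
    simp only
    calc (1 + r * a) * Real.exp (-(r * a)) ≤ Real.exp (r * a) * Real.exp (-(r * a)) := by
          gcongr; linarith [Real.add_one_le_exp (r * a)]
      _ = 1 := by rw [← Real.exp_add]; simp

/-! ### The cube as a product -/

instance (n : ℕ) : IsProbabilityMeasure (cubeMeasure n) := by
  constructor
  rw [cubeMeasure, Measure.restrict_apply_univ, unitCube, Real.volume_Icc_pi]
  norm_num

lemma cons_mem_unitCube {n : ℕ} {a : ℝ} {x : Fin n → ℝ} :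
    (Fin.cons a x : Fin (n + 1) → ℝ) ∈ unitCube (n + 1) ↔
      a ∈ Set.Icc (-(1/2) : ℝ) (1/2) ∧ x ∈ unitCube n := by
  simp only [unitCube, Set.mem_Icc, Pi.le_def, Fin.forall_fin_succ, Fin.cons_zero, Fin.cons_succ]
  tauto

lemma continuous_cons_prod (n : ℕ) :
    Continuous fun p : ℝ × (Fin n → ℝ) => (Fin.cons p.1 p.2 : Fin (n + 1) → ℝ) := by
  refine continuous_pi fun i => ?_
  refine Fin.cases ?_ (fun j => ?_) i
  · simpa using continuous_fst
  · simp only [Fin.cons_succ]; fun_prop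

lemma measurePreserving_cons (n : ℕ) :
    MeasurePreserving (fun p : ℝ × (Fin n → ℝ) => (Fin.cons p.1 p.2 : Fin (n + 1) → ℝ))
      ((volume.restrict (Set.Icc (-(1/2) : ℝ) (1/2))).prod (cubeMeasure n))
      (cubeMeasure (n + 1)) := by
  have h := (volume_preserving_piFinSuccAbove (fun _ : Fin (n + 1) => ℝ) 0).symm
  have h2 := h.restrict_preimage (s := unitCube (n + 1)) measurableSet_Icc
  have e : (MeasurableEquiv.piFinSuccAbove (fun _ : Fin (n + 1) => ℝ) 0).symm ⁻¹'
      unitCube (n + 1) = Set.Icc (-(1/2) : ℝ) (1/2) ×ˢ unitCube n := by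
    ext p
    have : (MeasurableEquiv.piFinSuccAbove (fun _ : Fin (n + 1) => ℝ) 0).symm p =
      Fin.cons p.1 p.2 := by
      simp [MeasurableEquiv.piFinSuccAbove, Fin.insertNthEquiv]
    rw [Set.mem_preimage, this, cons_mem_unitCube, Set.mem_prod]
  rw [e, Measure.volume_eq_prod, ← Measure.prod_restrict] at h2
  have h3 : (fun p : ℝ × (Fin n → ℝ) => (Fin.cons p.1 p.2 : Fin (n + 1) → ℝ)) =
      (MeasurableEquiv.piFinSuccAbove (fun _ : Fin (n + 1) => ℝ) 0).symm := by
    ext1 p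
    simp [MeasurableEquiv.piFinSuccAbove, Fin.insertNthEquiv]
  rw [h3]
  exact h2

lemma integral_cubeMeasure_succ {n : ℕ} {G : (Fin (n + 1) → ℝ) → ℝ}
    (hG : Integrable G (cubeMeasure (n + 1))) :
    ∫ x, G x ∂(cubeMeasure (n + 1)) =
      ∫ a in Set.Icc (-(1/2) : ℝ) (1/2), ∫ x, G (Fin.cons a x) ∂(cubeMeasure n) := by
  have h := measurePreserving_cons n
  rw [← h.map_eq, integral_map h.measurable.aemeasurable (by rw [h.map_eq]; exact hG.1),
    integral_prod]
  exact (h.integrable_comp hG.1).2 hG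

lemma lintegral_cubeMeasure_succ {n : ℕ} {G : (Fin (n + 1) → ℝ) → ENNReal}
    (hG : Measurable G) :
    ∫⁻ x, G x ∂(cubeMeasure (n + 1)) =
      ∫⁻ a in Set.Icc (-(1/2) : ℝ) (1/2), ∫⁻ x, G (Fin.cons a x) ∂(cubeMeasure n) := by
  have h := measurePreserving_cons n
  rw [← h.map_eq, lintegral_map hG h.measurable, lintegral_prod]
  exact (hG.comp h.measurable).aemeasurable

lemma continuous_integrable_cube {n : ℕ} {β : (Fin n → ℝ) → ℝ} (hβ : Continuous β) :
    Integrable β (cubeMeasure n) := by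
  exact hβ.continuousOn.integrableOn_compact isCompact_Icc

lemma ae_mem_unitCube (n : ℕ) : ∀ᵐ x ∂(cubeMeasure n), x ∈ unitCube n :=
  ae_restrict_mem measurableSet_Icc

/-! ### Transport on the cube -/

lemma integral_cube_pos {n : ℕ} {β : (Fin n → ℝ) → ℝ} (hβ : Continuous β) (hpos : ∀ x, 0 < β x) :
    0 < ∫ x, β x ∂(cubeMeasure n) := by
  rw [integral_pos_iff_support_of_nonneg (fun x => (hpos x).le) (continuous_integrable_cube hβ)]
  have : Function.support β = Set.univ := Set.eq_univ_of_forall fun x => (hpos x).ne'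
  rw [this]; simp

/-- The transport estimate on the cube, by induction on the dimension: the first coordinate is
transported with respect to the marginal of `β`, the others with respect to the conditional
densities (the Knothe rearrangement). The exponents `1 - 1 / b` of the successive densities `b`
are at most `log b` and at most `1`, so they add up to at most the logarithm of the full density and
to at most the dimension; this is where `min d n` comes from. -/
lemma transport_cube (n : ℕ) : ∀ {β : (Fin n → ℝ) → ℝ} (_ : Continuous β) (_ : ∀ x, 0 < β x)
    {R : ℝ} {h : ℝ → (Fin n → ℝ) → ℝ} (_ : Measurable (Function.uncurry h))
    (_ : ∀ r z, |h r z| ≤ 1) (_ : ∀ r z, z ∉ unitCube n → h r z = 0)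
    {Θ : (Fin n → ℝ) → ℝ → ENNReal} (_ : Measurable (Function.uncurry Θ))
    (_ : ∀ x, Monotone (Θ x))
    (_ : ∀ x ∈ unitCube n, ∀ y ∈ unitCube n, ∀ c : ℝ, ∀ ρ ∈ Set.Icc 0 R,
        ‖∫ r in Set.Ioc 0 ρ, h r (y + r • (y - x)) * Real.exp (c * r)‖ₑ ≤ Θ x c)
    (c : ℝ) {ρ : ℝ} (_ : ρ ∈ Set.Icc 0 R),
    ‖∫ r in Set.Ioc 0 ρ, (∫ z, h r z ∂(cubeMeasure n)) * Real.exp (c * r)‖ₑ ≤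
      ∫⁻ x, ENNReal.ofReal (β x / ∫ y, β y ∂(cubeMeasure n)) *
        Θ x (c + min (Real.log (β x / ∫ y, β y ∂(cubeMeasure n))) n) ∂(cubeMeasure n) := by
  induction n with
  | zero =>
    intro β hβ hpos R h hm h1 h0 Θ hΘm hΘ hyp c ρ hρ
    have hd : (default : Fin 0 → ℝ) ∈ unitCube 0 := by simp [unitCube]
    rw [lintegral_unique]
    simp_rw [integral_unique]
    simp only [measure_univ, probReal_univ, one_smul, mul_one, Nat.cast_zero]
    rw [div_self (hpos _).ne']
    simp only [ENNReal.ofReal_one, Real.log_one, min_self, add_zero, one_mul]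
    have := hyp default hd default hd c ρ hρ
    have e : ∀ r : ℝ, (default : Fin 0 → ℝ) + r • (default - default) = default := fun r =>
      Subsingleton.elim _ _
    simp_rw [e] at this
    convert this
  | succ n ih =>
    intro β hβ hpos R h hm h1 h0 Θ hΘm hΘ hyp c ρ hρ
    set J : Set ℝ := Set.Icc (-(1/2) : ℝ) (1/2) with hJ
    set Z : ℝ := ∫ y, β y ∂(cubeMeasure (n + 1)) with hZ
    have hZpos : 0 < Z := integral_cube_pos hβ hpos
    have hcc := continuous_cons_prod n
    -- the marginal of `β` in the first coordinate
    set β₁ : ℝ → ℝ := fun a => ∫ x, β (Fin.cons a x) ∂(cubeMeasure n) with hβ₁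
    have hsec : ∀ a, Continuous fun x : Fin n → ℝ => β (Fin.cons a x) := fun a =>
      hβ.comp (hcc.comp (by fun_prop : Continuous fun x : Fin n → ℝ => (a, x)))
    have hβ₁pos : ∀ a, 0 < β₁ a := fun a => integral_cube_pos (hsec a) fun _ => hpos _
    have hβ₁c : Continuous β₁ := by
      refine continuous_parametric_integral_of_continuous (f := fun a x => β (Fin.cons a x))
        (hβ.comp hcc) isCompact_Icc
    have hZ₁ : ∫ a in J, β₁ a = Z := (integral_cubeMeasure_succ (continuous_integrable_cube hβ)).symm
    set b : ℝ → ℝ := fun a => β₁ a / Z with hb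
    have hbpos : ∀ a, 0 < b a := fun a => div_pos (hβ₁pos a) hZpos
    have hhc : ∀ r, Measurable fun p : ℝ × (Fin n → ℝ) => h r (Fin.cons p.1 p.2) := fun r =>
      hm.comp (measurable_const.prodMk hcc.measurable)
    have hmc : Measurable fun q : (ℝ × ℝ) × (Fin n → ℝ) => h q.1.1 (Fin.cons q.1.2 q.2) :=
      hm.comp ((measurable_fst.comp measurable_fst).prodMk (hcc.measurable.comp
        ((measurable_snd.comp measurable_fst).prodMk measurable_snd)))
    have hfub : ∀ r, ∫ z, h r z ∂(cubeMeasure (n + 1)) =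
        ∫ a in J, ∫ x, h r (Fin.cons a x) ∂(cubeMeasure n) := fun r =>
      integral_cubeMeasure_succ (Integrable.of_bound
        (hm.comp (measurable_const.prodMk measurable_id)).aestronglyMeasurable 1
        (Filter.Eventually.of_forall fun z => h1 r z))
    simp_rw [hfub]
    -- transport in the first coordinate; its hypothesis on rays is the induction hypothesis for the
    -- conditional density, along `h r (y + r (y - a), ·)` with the first coordinate already on its ray
    refine (transport_one (b := b) (R := R) (H := fun r a => ∫ x, h r (Fin.cons a x) ∂(cubeMeasure n))
      (Θ := fun a c => ∫⁻ x, ENNReal.ofReal (β (Fin.cons a x) / β₁ a) *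
        Θ (Fin.cons a x) (c + min (Real.log (β (Fin.cons a x) / β₁ a)) n) ∂(cubeMeasure n))
      (hβ₁c.div_const Z) hbpos ?_ ?_ ?_ ?_ ?_ c hρ).trans ?_
    · rw [integral_div, hZ₁, div_self hZpos.ne']
    · exact (StronglyMeasurable.integral_prod_right (f := fun (p : ℝ × ℝ) x => h p.1 (Fin.cons p.2 x))
        hmc.stronglyMeasurable).measurable
    · intro r a
      rw [← Real.norm_eq_abs]
      refine (norm_integral_le_of_norm_le_const (C := 1) (Filter.Eventually.of_forall fun x => h1 r _)).trans ?_
      simp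
    · intro r a ha
      have : ∀ x : Fin n → ℝ, h r (Fin.cons a x) = 0 := fun x =>
        h0 r _ fun hx => ha (cons_mem_unitCube.1 hx).1
      simp [this]
    · intro a ha y hy c' ρ' hρ'
      refine ih (β := fun x => β (Fin.cons a x)) (R := R)
        (h := fun r x => h r (Fin.cons (y + r * (y - a)) x))
        (Θ := fun x => Θ (Fin.cons a x)) (hsec a) (fun _ => hpos _) ?_ (fun _ _ => h1 _ _) ?_ ?_
        (fun x => hΘ _) ?_ c' hρ'
      · exact hm.comp (measurable_fst.prodMk (hcc.measurable.comp
          ((by fun_prop : Measurable fun p : ℝ × (Fin n → ℝ) => y + p.1 * (y - a)).prodMk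
            measurable_snd)))
      · intro r z hz
        exact h0 r _ fun hx => hz (cons_mem_unitCube.1 hx).2
      · exact hΘm.comp ((hcc.measurable.comp (measurable_const.prodMk measurable_fst)).prodMk
          measurable_snd)
      · intro x hx x' hx' c'' ρ'' hρ''
        have := hyp (Fin.cons a x) (cons_mem_unitCube.2 ⟨ha, hx⟩) (Fin.cons y x')
          (cons_mem_unitCube.2 ⟨hy, hx'⟩) c'' ρ'' hρ''
        convert this using 6 with r
        ext i
        refine Fin.cases ?_ (fun j => ?_) i <;> simp
    · have hGm : Measurable fun x : Fin (n + 1) → ℝ => ENNReal.ofReal (β x / Z) *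
          Θ x (c + min (Real.log (β x / Z)) ((n + 1 : ℕ) : ℝ)) := by
        refine Measurable.mul (by fun_prop) ?_
        exact hΘm.comp (measurable_id.prodMk (by fun_prop))
      rw [lintegral_cubeMeasure_succ hGm]
      refine lintegral_mono fun a => ?_
      simp only
      rw [← lintegral_const_mul' _ _ ENNReal.ofReal_ne_top]
      refine lintegral_mono fun x => ?_
      simp only
      rw [← mul_assoc, ← ENNReal.ofReal_mul (hbpos a).le]
      have e : b a * (β (Fin.cons a x) / β₁ a) = β (Fin.cons a x) / Z := by
        simp only [hb]; field_simp [(hβ₁pos a).ne']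
      rw [e]
      gcongr
      refine hΘ _ ?_
      have hlog : Real.log (β (Fin.cons a x) / Z) =
          Real.log (b a) + Real.log (β (Fin.cons a x) / β₁ a) := by
        rw [← e, Real.log_mul (hbpos a).ne' (div_pos (hpos _) (hβ₁pos a)).ne']
      have h2 : 1 - 1 / b a ≤ Real.log (b a) := by
        rw [one_div]; exact Real.one_sub_inv_le_log_of_pos (hbpos a)
      have h3 : 0 < 1 / b a := one_div_pos.2 (hbpos a)
      rw [add_assoc, hlog]
      gcongr
      push_cast
      refine le_min ?_ ?_
      · exact add_le_add h2 (min_le_left _ _)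
      · linarith [min_le_right (Real.log (β (Fin.cons a x) / β₁ a)) (n : ℝ)]

/-! ### Remez-type inequalities -/

/-- A compact set of measure greater than `k δ` contains `k + 1` points with gaps at least `δ`. -/
lemma exists_spaced_points {δ : ℝ} (hδ : 0 < δ) (k : ℕ) : ∀ {E : Set ℝ}, IsCompact E →
    ENNReal.ofReal (k * δ) < volume E →
    ∃ x : ℕ → ℝ, (∀ i ≤ k, x i ∈ E) ∧ ∀ i j, i ≤ j → j ≤ k → ((j : ℝ) - i) * δ ≤ x j - x i := by
  induction k with
  | zero =>
    intro E hE hv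
    have hne : E.Nonempty := by
      by_contra h
      rw [Set.not_nonempty_iff_eq_empty.1 h] at hv
      simp at hv
    obtain ⟨a, ha⟩ := hne
    refine ⟨fun _ => a, fun _ _ => ha, fun i j hij hj => ?_⟩
    have : i = 0 := by omega
    have : j = 0 := by omega
    subst_vars; simp
  | succ k ih =>
    intro E hE hv
    have hne : E.Nonempty := by
      by_contra h
      rw [Set.not_nonempty_iff_eq_empty.1 h] at hv
      simp at hv
    -- take the least point of `E` and discard the points closer to it than `δ`
    obtain ⟨a, ha, hmin⟩ := hE.exists_isLeast hne
    have hE' : IsCompact (E ∩ Set.Ici (a + δ)) := hE.inter_right isClosed_Ici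
    have hv' : ENNReal.ofReal (k * δ) < volume (E ∩ Set.Ici (a + δ)) := by
      by_contra hcon
      push Not at hcon
      have hsub : E ⊆ (E ∩ Set.Ici (a + δ)) ∪ Set.Ico a (a + δ) := by
        intro x hx
        by_cases h : a + δ ≤ x
        · exact Or.inl ⟨hx, h⟩
        · exact Or.inr ⟨hmin hx, not_le.1 h⟩
      have h1 := (measure_mono (μ := volume) hsub).trans (measure_union_le _ _)
      rw [Real.volume_Ico] at h1
      have h2 : volume E ≤ ENNReal.ofReal (k * δ) + ENNReal.ofReal (a + δ - a) :=
        h1.trans (add_le_add hcon le_rfl)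
      rw [← ENNReal.ofReal_add (by positivity) (by linarith)] at h2
      refine absurd (hv.trans_le h2) ?_
      push_cast
      ring_nf
      simp
    obtain ⟨x, hx, hgap⟩ := ih hE' hv'
    refine ⟨fun i => Nat.casesOn i a x, ?_, ?_⟩
    · intro i hi
      cases i with
      | zero => exact ha
      | succ i => exact (hx i (by omega)).1
    · intro i j hij hj
      cases i with
      | zero =>
        cases j with
        | zero => simp
        | succ j =>
          have h1 := (hx 0 (by omega)).2
          have h2 := hgap 0 j (by omega) (by omega)
          simp only [Set.mem_Ici] at h1
          change _ ≤ x j - a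
          push_cast at h2 ⊢
          linarith
      | succ i =>
        cases j with
        | zero => omega
        | succ j =>
          have h2 := hgap i j (by omega) (by omega)
          change _ ≤ x j - x i
          push_cast
          linarith

lemma prod_abs_sub_eq (i m : ℕ) (him : i ≤ m) :
    ∏ j ∈ (Finset.range (m + 1)).erase i, |(i : ℝ) - j| = (i.factorial * (m - i).factorial : ℕ) := by
  induction m, him using Nat.le_induction with
  | base =>
    have : (Finset.range (i + 1)).erase i = Finset.range i := by
      ext j; simp; omega
    rw [this, Nat.sub_self, Nat.factorial_zero, mul_one, ← Finset.prod_range_add_one_eq_factorial,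
      ← Finset.prod_range_reflect]
    push_cast
    refine Finset.prod_congr rfl fun j hj => ?_
    have : j < i := Finset.mem_range.1 hj
    rw [Nat.cast_sub (by omega), Nat.cast_sub (by omega)]
    push_cast
    have : (j : ℝ) < i := by exact_mod_cast this
    rw [abs_of_pos (by linarith)]
    ring
  | succ m him ih =>
    have : (Finset.range (m + 1 + 1)).erase i = insert (m + 1) ((Finset.range (m + 1)).erase i) := by
      ext j; simp; omega
    rw [this, Finset.prod_insert (by simp), ih]
    have h1 : m + 1 - i = (m - i) + 1 := by omega
    rw [h1, Nat.factorial_succ]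
    push_cast
    have h2 : (i : ℝ) ≤ m := by exact_mod_cast him
    rw [Nat.cast_sub him, abs_of_neg (by linarith)]
    ring

/-- A weak form of Stirling's inequality. -/
lemma succ_pow_le (m : ℕ) : ((m : ℝ) + 1) ^ m ≤ 3 ^ m * m.factorial := by
  induction m with
  | zero => simp
  | succ m ih =>
    have hm : (0:ℝ) < m + 1 := by positivity
    have h1 : (1 + 1 / ((m:ℝ) + 1)) ^ (m + 1) ≤ 3 := by
      have h := Real.add_one_le_exp (1 / ((m:ℝ) + 1))
      calc (1 + 1 / ((m:ℝ) + 1)) ^ (m + 1) ≤ (Real.exp (1 / ((m:ℝ) + 1))) ^ (m + 1) := by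
            apply pow_le_pow_left₀ (by positivity); linarith
        _ = Real.exp 1 := by
            rw [← Real.exp_nat_mul]; congr 1; push_cast; field_simp
        _ ≤ 3 := by linarith [Real.exp_one_lt_d9]
    have h2 : ((m + 1 : ℕ) : ℝ) + 1 = (m + 1) * (1 + 1 / ((m:ℝ) + 1)) := by
      push_cast; field_simp
    rw [h2, mul_pow, pow_succ, Nat.factorial_succ]
    push_cast
    calc ((m:ℝ) + 1) ^ m * (m + 1) * (1 + 1 / ((m:ℝ) + 1)) ^ (m + 1)
        ≤ (3 ^ m * m.factorial) * (m + 1) * 3 := by gcongr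
      _ = _ := by ring

/-- The Lagrange weights of suitably chosen nodes in a set of measure at least `l`. -/
lemma exists_nodes {E : Set ℝ} (hE : IsCompact E) {l : ℝ} (hl : 0 < l)
    (hv : ENNReal.ofReal l ≤ volume E) (m : ℕ) :
    ∃ x : ℕ → ℝ, (∀ i ≤ m, x i ∈ E) ∧ Set.InjOn x (Finset.range (m + 1)) ∧
      ∑ i ∈ Finset.range (m + 1), ∏ j ∈ (Finset.range (m + 1)).erase i, |x i - x j|⁻¹ ≤
        (6 / l) ^ m := by
  set δ := l / (m + 1) with hδ
  have hm : (0:ℝ) < m + 1 := by positivity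
  have hδpos : 0 < δ := by positivity
  obtain ⟨x, hx, hgap⟩ := exists_spaced_points hδpos m hE (by
    refine lt_of_lt_of_le ?_ hv
    rw [ENNReal.ofReal_lt_ofReal_iff hl, hδ, mul_div_assoc', div_lt_iff₀ hm]
    nlinarith)
  have habs : ∀ i ≤ m, ∀ j ≤ m, |(i : ℝ) - j| * δ ≤ |x i - x j| := by
    intro i hi j hj
    rcases le_total i j with h | h
    · have h' : (i:ℝ) ≤ j := by exact_mod_cast h
      rw [abs_sub_comm, abs_of_nonneg (sub_nonneg.2 h'), abs_sub_comm]
      exact (hgap i j h hj).trans (le_abs_self _)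
    · have h' : (j:ℝ) ≤ i := by exact_mod_cast h
      rw [abs_of_nonneg (sub_nonneg.2 h')]
      exact (hgap j i h hi).trans (le_abs_self _)
  have hdist : ∀ i j : ℕ, i ≠ j → 0 < |(i : ℝ) - j| := fun i j h =>
    abs_pos.2 (sub_ne_zero.2 (by exact_mod_cast h))
  refine ⟨x, hx, ?_, ?_⟩
  · intro i hi j hj hij
    by_contra hne
    have := habs i (by simpa [Nat.lt_succ_iff] using hi) j (by simpa [Nat.lt_succ_iff] using hj)
    rw [hij, sub_self, abs_zero] at this
    exact absurd this (not_le.2 (mul_pos (hdist i j hne) hδpos))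
  · have h1 : ∀ i ∈ Finset.range (m + 1),
        ∏ j ∈ (Finset.range (m + 1)).erase i, |x i - x j|⁻¹ ≤
          (m.choose i : ℝ) * (δ⁻¹ ^ m / m.factorial) := by
      intro i hi
      have hi' : i ≤ m := Nat.lt_succ_iff.1 (Finset.mem_range.1 hi)
      calc ∏ j ∈ (Finset.range (m + 1)).erase i, |x i - x j|⁻¹
          ≤ ∏ j ∈ (Finset.range (m + 1)).erase i, (δ⁻¹ * |(i : ℝ) - j|⁻¹) := by
            refine Finset.prod_le_prod (fun _ _ => by positivity) fun j hj => ?_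
            rw [Finset.mem_erase, Finset.mem_range] at hj
            have hp := hdist i j hj.1.symm
            rw [← mul_inv, mul_comm]
            exact inv_anti₀ (mul_pos hp hδpos) (habs i hi' j (by omega))
        _ = δ⁻¹ ^ m * ((i.factorial * (m - i).factorial : ℕ) : ℝ)⁻¹ := by
            rw [Finset.prod_mul_distrib, Finset.prod_const, Finset.card_erase_of_mem hi,
              Finset.card_range, Finset.prod_inv_distrib, prod_abs_sub_eq i m hi']
            simp
        _ = _ := by
            rw [Nat.cast_choose ℝ hi']
            push_cast
            have := Nat.factorial_ne_zero m
            field_simp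
    calc _ ≤ ∑ i ∈ Finset.range (m + 1), (m.choose i : ℝ) * (δ⁻¹ ^ m / m.factorial) :=
          Finset.sum_le_sum h1
      _ = 2 ^ m * (δ⁻¹ ^ m / m.factorial) := by
          rw [← Finset.sum_mul]
          congr 1
          exact_mod_cast Nat.sum_range_choose m
      _ ≤ (6 / l) ^ m := by
          have hf : (0:ℝ) < m.factorial := by exact_mod_cast Nat.factorial_pos m
          rw [hδ, inv_div, div_pow, div_pow, div_div, mul_div_assoc', div_le_div_iff₀ (by positivity) (by positivity)]
          have := succ_pow_le m
          have h6 : (6:ℝ) ^ m = 2 ^ m * 3 ^ m := by rw [← mul_pow]; norm_num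
          rw [h6]
          calc (2:ℝ) ^ m * (m + 1) ^ m * l ^ m ≤ 2 ^ m * (3 ^ m * m.factorial) * l ^ m := by gcongr
            _ = _ := by ring

/-- Remez-type inequality: a polynomial that is small on a set of positive measure is not large
elsewhere. -/
lemma remez_eval {P : Polynomial ℝ} {m : ℕ} (hP : P.natDegree ≤ m) {E : Set ℝ} (hE : IsCompact E)
    {l s D y : ℝ} (hl : 0 < l) (hv : ENNReal.ofReal l ≤ volume E)
    (hs : ∀ x ∈ E, |P.eval x| ≤ s) (hD : ∀ x ∈ E, |y - x| ≤ D) :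
    |P.eval y| ≤ s * (6 * D / l) ^ m := by
  obtain ⟨x, hx, hinj, hw⟩ := exists_nodes hE hl hv m
  have hdeg : P.degree < (Finset.range (m + 1)).card := by
    rw [Finset.card_range]
    exact (Polynomial.degree_le_natDegree).trans_lt (by exact_mod_cast Nat.lt_succ_of_le hP)
  have hs0 : 0 ≤ s := (abs_nonneg _).trans (hs _ (hx 0 (by omega)))
  have hD0 : 0 ≤ D := (abs_nonneg _).trans (hD _ (hx 0 (by omega)))
  rw [Lagrange.eq_interpolate hinj hdeg, Lagrange.interpolate_apply, Polynomial.eval_finsetSum]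
  refine (Finset.abs_sum_le_sum_abs _ _).trans ?_
  calc _ ≤ ∑ i ∈ Finset.range (m + 1), s * (D ^ m *
          ∏ j ∈ (Finset.range (m + 1)).erase i, |x i - x j|⁻¹) := by
        refine Finset.sum_le_sum fun i hi => ?_
        have hi' : i ≤ m := Nat.lt_succ_iff.1 (Finset.mem_range.1 hi)
        rw [Polynomial.eval_mul, Polynomial.eval_C, abs_mul]
        refine mul_le_mul (hs _ (hx i hi')) ?_ (abs_nonneg _) hs0
        rw [Lagrange.basis, Polynomial.eval_prod, Finset.abs_prod]
        have hcard : D ^ m = ∏ j ∈ (Finset.range (m + 1)).erase i, D := by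
          rw [Finset.prod_const, Finset.card_erase_of_mem hi, Finset.card_range]; simp
        rw [hcard, ← Finset.prod_mul_distrib]
        refine Finset.prod_le_prod (fun _ _ => abs_nonneg _) fun j hj => ?_
        rw [Finset.mem_erase, Finset.mem_range] at hj
        simp only [Lagrange.basisDivisor, Polynomial.eval_mul, Polynomial.eval_C,
          Polynomial.eval_sub, Polynomial.eval_X, abs_mul, abs_inv]
        rw [mul_comm]
        gcongr
        exact hD _ (hx j (by omega))
    _ = s * (D ^ m * ∑ i ∈ Finset.range (m + 1),
          ∏ j ∈ (Finset.range (m + 1)).erase i, |x i - x j|⁻¹) := by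
        rw [Finset.mul_sum, Finset.mul_sum]
    _ ≤ s * (D ^ m * (6 / l) ^ m) := by gcongr
    _ = _ := by rw [← mul_pow]; ring_nf

/-- The version of `remez_eval` for the top coefficient, the evaluation at infinity. -/
lemma remez_coeff {P : Polynomial ℝ} {m : ℕ} (hP : P.natDegree ≤ m) {E : Set ℝ}
    (hE : IsCompact E) {l s : ℝ} (hl : 0 < l) (hv : ENNReal.ofReal l ≤ volume E)
    (hs : ∀ x ∈ E, |P.eval x| ≤ s) : |P.coeff m| ≤ s * (6 / l) ^ m := by
  obtain ⟨x, hx, hinj, hw⟩ := exists_nodes hE hl hv m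
  have hdeg : P.degree < (Finset.range (m + 1)).card := by
    rw [Finset.card_range]
    exact (Polynomial.degree_le_natDegree).trans_lt (by exact_mod_cast Nat.lt_succ_of_le hP)
  have hs0 : 0 ≤ s := (abs_nonneg _).trans (hs _ (hx 0 (by omega)))
  have h := Lagrange.coeff_eq_sum hinj hdeg
  rw [Finset.card_range, Nat.add_sub_cancel] at h
  rw [h]
  refine (Finset.abs_sum_le_sum_abs _ _).trans ?_
  calc _ ≤ ∑ i ∈ Finset.range (m + 1), s *
          ∏ j ∈ (Finset.range (m + 1)).erase i, |x i - x j|⁻¹ := by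
        refine Finset.sum_le_sum fun i hi => ?_
        have hi' : i ≤ m := Nat.lt_succ_iff.1 (Finset.mem_range.1 hi)
        rw [abs_div, div_eq_mul_inv, Finset.abs_prod, ← Finset.prod_inv_distrib]
        gcongr
        exact hs _ (hx i hi')
    _ ≤ _ := by rw [← Finset.mul_sum]; gcongr

/-! ### Oscillatory integrals of polynomials in one variable -/

/-- The indicator of the negative half-line, normalised so that `χ v + χ (-v) = 1`. -/
noncomputable def chi (v : ℝ) : ℝ := if v < 0 then 1 else if v = 0 then 1 / 2 else 0

lemma measurable_chi : Measurable chi :=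
  Measurable.ite measurableSet_Iio measurable_const
    (Measurable.ite (measurableSet_singleton 0) measurable_const measurable_const)

lemma chi_nonneg (v : ℝ) : 0 ≤ chi v := by
  unfold chi; split_ifs <;> norm_num

lemma chi_le_one (v : ℝ) : chi v ≤ 1 := by
  unfold chi; split_ifs <;> norm_num

lemma chi_add_chi_neg (v : ℝ) : chi v + chi (-v) = 1 := by
  unfold chi
  rcases lt_trichotomy v 0 with h | h | h
  · rw [if_pos h, if_neg (by linarith), if_neg (by linarith)]; norm_num
  · subst h; norm_num
  · rw [if_neg (by linarith), if_neg (by linarith), if_pos (by linarith)]; norm_num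

lemma chi_of_neg {v : ℝ} (h : v < 0) : chi v = 1 := if_pos h

lemma chi_of_pos {v : ℝ} (h : 0 < v) : chi v = 0 := by
  unfold chi; rw [if_neg (by linarith), if_neg (by linarith)]

lemma sign_of_ne_zero {f : ℝ → ℝ} (hf : Continuous f) {a b : ℝ}
    (h : ∀ x ∈ Set.Ioo a b, f x ≠ 0) :
    (∀ x ∈ Set.Ioo a b, f x < 0) ∨ (∀ x ∈ Set.Ioo a b, 0 < f x) := by
  by_contra hcon
  push Not at hcon
  obtain ⟨⟨x, hx, hx0⟩, ⟨y, hy, hy0⟩⟩ := hcon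
  have hsub : Set.uIcc y x ⊆ Set.Ioo a b := Set.OrdConnected.uIcc_subset Set.ordConnected_Ioo hy hx
  obtain ⟨z, hz, hz0⟩ := intermediate_value_uIcc (hf.continuousOn (s := Set.uIcc y x))
    (Set.mem_uIcc.2 (Or.inl ⟨hy0, hx0⟩))
  exact h z (hsub hz) hz0

lemma nonneg_Icc_of_Ioo {f : ℝ → ℝ} (hf : Continuous f) {a b : ℝ} (hab : a < b)
    (h : ∀ x ∈ Set.Ioo a b, 0 ≤ f x) : ∀ x ∈ Set.Icc a b, 0 ≤ f x := by
  have hcl2 : IsClosed {x | 0 ≤ f x} := isClosed_le continuous_const hf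
  rw [← closure_Ioo hab.ne]
  exact fun x hx => closure_minimal (t := {x | 0 ≤ f x}) h hcl2 hx

/-- A van der Corput estimate: integration by parts against `1 / g'`, which is monotone. -/
lemma van_der_corput {g : Polynomial ℝ} {ψ ψ' : ℝ → ℝ} (hψ : ∀ v, HasDerivAt ψ (ψ' v) v)
    (hψ'c : Continuous ψ') {t s a b ε : ℝ} (hs : 0 < s) (hab : a ≤ b) (hψt : ∀ v, |ψ v| ≤ t)
    (hg : ∀ r ∈ Set.Icc a b, s ≤ |g.derivative.eval r|) (hε : |ε| = 1)
    (hg2 : ∀ r ∈ Set.Icc a b, 0 ≤ ε * g.derivative.derivative.eval r) :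
    ∫ r in a..b, ψ' (g.eval r) ≤ 4 * t / s := by
  set p := g.derivative with hp
  set q := p.derivative with hq
  have ht : 0 ≤ t := (abs_nonneg _).trans (hψt 0)
  have hp0 : ∀ r ∈ Set.Icc a b, p.eval r ≠ 0 := fun r hr h => by
    have := hg r hr
    rw [h, abs_zero] at this
    linarith
  have hψc : Continuous ψ := continuous_iff_continuousAt.2 fun x => (hψ x).continuousAt
  have hd : ∀ r ∈ Set.uIcc a b, HasDerivAt (fun r => (ψ (g.eval r) - t * ε) * (p.eval r)⁻¹)
      (ψ' (g.eval r) + (t * ε - ψ (g.eval r)) * (q.eval r / p.eval r ^ 2)) r := by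
    intro r hr
    rw [Set.uIcc_of_le hab] at hr
    have h1 : HasDerivAt (fun r => ψ (g.eval r) - t * ε) (ψ' (g.eval r) * p.eval r) r :=
      ((hψ _).comp r (g.hasDerivAt r)).sub_const _
    have h2 : HasDerivAt (fun r => (p.eval r)⁻¹) (-(q.eval r) / p.eval r ^ 2) r :=
      (p.hasDerivAt r).inv (hp0 r hr)
    refine (h1.mul h2).congr_deriv ?_
    rw [mul_assoc, mul_inv_cancel₀ (hp0 r hr)]
    ring
  have hcont : ContinuousOn (fun r => ψ' (g.eval r) + (t * ε - ψ (g.eval r)) *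
      (q.eval r / p.eval r ^ 2)) (Set.uIcc a b) := by
    rw [Set.uIcc_of_le hab]
    have hgc := g.continuous
    have hpc := p.continuous
    have hqc := q.continuous
    refine ContinuousOn.add (by fun_prop) (ContinuousOn.mul (by fun_prop)
      (ContinuousOn.div (by fun_prop) (by fun_prop) fun r hr => pow_ne_zero 2 (hp0 r hr)))
  have hftc := intervalIntegral.integral_eq_sub_of_hasDerivAt hd hcont.intervalIntegrable
  -- the correction term is nonnegative because the sign `ε` of `g''` is constant; it completes the
  -- integrand to an exact derivative
  have hmono : ∫ r in a..b, ψ' (g.eval r) ≤ ∫ r in a..b,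
      (ψ' (g.eval r) + (t * ε - ψ (g.eval r)) * (q.eval r / p.eval r ^ 2)) := by
    refine intervalIntegral.integral_mono_on hab
      ((hψ'c.comp g.continuous).intervalIntegrable _ _) hcont.intervalIntegrable fun r hr => ?_
    have h1 := hg2 r hr
    have h2 := abs_le.1 (hψt (g.eval r))
    have h3 : 0 ≤ (t * ε - ψ (g.eval r)) * (q.eval r) := by
      rcases (abs_eq zero_le_one).1 hε with h | h
      · rw [h] at h1 ⊢
        exact mul_nonneg (by linarith) (by linarith)
      · rw [h] at h1 ⊢
        exact mul_nonneg_of_nonpos_of_nonpos (by linarith) (by linarith)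
    have : 0 ≤ (t * ε - ψ (g.eval r)) * (q.eval r / p.eval r ^ 2) := by
      rw [mul_div_assoc']; positivity
    linarith
  rw [hftc] at hmono
  have hbd : ∀ r ∈ Set.Icc a b, |(ψ (g.eval r) - t * ε) * (p.eval r)⁻¹| ≤ 2 * t / s := by
    intro r hr
    rw [abs_mul, abs_inv, ← div_eq_mul_inv]
    have : |ψ (g.eval r) - t * ε| ≤ 2 * t := by
      refine (abs_sub _ _).trans ?_
      rw [abs_mul, hε, abs_of_nonneg ht]
      linarith [hψt (g.eval r)]
    exact div_le_div₀ (by linarith) this hs (hg r hr)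
  have ha := abs_le.1 (hbd a ⟨le_rfl, hab⟩)
  have hb := abs_le.1 (hbd b ⟨hab, le_rfl⟩)
  have : 4 * t / s = 2 * t / s + 2 * t / s := by ring
  linarith

lemma van_der_corput_abs {g : Polynomial ℝ} {ψ ψ' : ℝ → ℝ} (hψ : ∀ v, HasDerivAt ψ (ψ' v) v)
    (hψ'c : Continuous ψ') {t s a b ε : ℝ} (hs : 0 < s) (hab : a ≤ b) (hψt : ∀ v, |ψ v| ≤ t)
    (hg : ∀ r ∈ Set.Icc a b, s ≤ |g.derivative.eval r|) (hε : |ε| = 1)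
    (hg2 : ∀ r ∈ Set.Icc a b, 0 ≤ ε * g.derivative.derivative.eval r) :
    |∫ r in a..b, ψ' (g.eval r)| ≤ 4 * t / s := by
  refine abs_le'.2 ⟨van_der_corput hψ hψ'c hs hab hψt hg hε hg2, ?_⟩
  rw [← intervalIntegral.integral_neg]
  exact van_der_corput (fun v => (hψ v).neg) hψ'c.neg hs hab
    (fun v => by simpa using hψt v) hg hε hg2

/-- On an interval on which `g`, `g'² - s²` and `g''` have no zeros, either `|g'| ≤ s` throughout,
and the trivial bound by the length is used, or `|g'| ≥ s` and the van der Corput estimate applies. -/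
lemma integral_half_piece {g : Polynomial ℝ} {ψ ψ' : ℝ → ℝ} (hψ : ∀ v, HasDerivAt ψ (ψ' v) v)
    (hψ'c : Continuous ψ') (hψ1 : ∀ v, |ψ' v| ≤ 1) {t s a b : ℝ} (hs : 0 < s) (hab : a ≤ b)
    (hψt : ∀ v, |ψ v| ≤ t)
    (h1 : ∀ r ∈ Set.Ioo a b, g.eval r ≠ 0)
    (h2 : ∀ r ∈ Set.Ioo a b, g.derivative.eval r ^ 2 - s ^ 2 ≠ 0)
    (h3 : g.derivative.derivative = 0 ∨ ∀ r ∈ Set.Ioo a b, g.derivative.derivative.eval r ≠ 0) :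
    |∫ r in a..b, ψ' (g.eval r) * chi (g.eval r)| ≤
      (∫ r in a..b, {r | |g.derivative.eval r| ≤ s}.indicator 1 r) + 4 * t / s := by
  have ht : 0 ≤ t := (abs_nonneg _).trans (hψt 0)
  have hts : 0 ≤ 4 * t / s := by positivity
  have hind : 0 ≤ ∫ r in a..b, {r | |g.derivative.eval r| ≤ s}.indicator (1 : ℝ → ℝ) r :=
    intervalIntegral.integral_nonneg hab fun r _ => Set.indicator_nonneg (fun _ _ => zero_le_one) _
  rcases hab.eq_or_lt with rfl | hlt
  · simpa using hts
  have hae : ∀ᵐ r : ℝ, r ≠ b := by simp [ae_iff]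
  rcases sign_of_ne_zero g.continuous h1 with hneg | hpos
  · have e : ∫ r in a..b, ψ' (g.eval r) * chi (g.eval r) = ∫ r in a..b, ψ' (g.eval r) := by
      refine intervalIntegral.integral_congr_ae ?_
      filter_upwards [hae] with r hr hrI
      rw [Set.uIoc_of_le hab] at hrI
      rw [chi_of_neg (hneg r ⟨hrI.1, lt_of_le_of_ne hrI.2 hr⟩), mul_one]
    rw [e]
    have hc : Continuous fun r => g.derivative.eval r ^ 2 - s ^ 2 := by
      have := g.derivative.continuous
      fun_prop
    rcases sign_of_ne_zero hc h2 with hsm | hla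
    · have e2 : ∫ r in a..b, {r | |g.derivative.eval r| ≤ s}.indicator (1 : ℝ → ℝ) r = b - a := by
        have : ∫ r in a..b, {r | |g.derivative.eval r| ≤ s}.indicator (1 : ℝ → ℝ) r =
            ∫ r in a..b, (1:ℝ) := by
          refine intervalIntegral.integral_congr_ae ?_
          filter_upwards [hae] with r hr hrI
          rw [Set.uIoc_of_le hab] at hrI
          have := hsm r ⟨hrI.1, lt_of_le_of_ne hrI.2 hr⟩
          have h : |g.derivative.eval r| ≤ s := abs_le_of_sq_le_sq (by linarith) hs.le
          simp [Set.indicator, h]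
        rw [this]; simp
      rw [e2]
      have := intervalIntegral.norm_integral_le_of_norm_le_const (C := 1) (a := a) (b := b)
        (f := fun r => ψ' (g.eval r)) (fun r _ => hψ1 _)
      rw [abs_of_nonneg (by linarith), one_mul, Real.norm_eq_abs] at this
      linarith
    · have hg : ∀ r ∈ Set.Icc a b, s ≤ |g.derivative.eval r| := by
        intro r hr
        have h := nonneg_Icc_of_Ioo hc hlt (fun r hr => (hla r hr).le) r hr
        exact (abs_of_pos hs) ▸ sq_le_sq.1 (by linarith)
      have key : ∃ ε : ℝ, |ε| = 1 ∧ ∀ r ∈ Set.Icc a b, 0 ≤ ε * g.derivative.derivative.eval r := by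
        rcases h3 with h3 | h3
        · exact ⟨1, abs_one, fun r _ => by rw [h3]; simp⟩
        · have hc2 := g.derivative.derivative.continuous
          rcases sign_of_ne_zero hc2 h3 with hn | hp
          · refine ⟨-1, by simp, ?_⟩
            exact nonneg_Icc_of_Ioo (by fun_prop) hlt fun r hr => by linarith [hn r hr]
          · refine ⟨1, by simp, ?_⟩
            exact nonneg_Icc_of_Ioo (by fun_prop) hlt fun r hr => by linarith [hp r hr]
      obtain ⟨ε, hε, hg2⟩ := key
      have := van_der_corput_abs hψ hψ'c hs hab hψt hg hε hg2
      linarith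
  · have e : ∫ r in a..b, ψ' (g.eval r) * chi (g.eval r) = 0 := by
      refine intervalIntegral.integral_zero_ae ?_
      filter_upwards [hae] with r hr hrI
      rw [Set.uIoc_of_le hab] at hrI
      rw [chi_of_pos (hpos r ⟨hrI.1, lt_of_le_of_ne hrI.2 hr⟩), mul_zero]
    rw [e, abs_zero]
    linarith

lemma measurable_half (g : Polynomial ℝ) {ψ' : ℝ → ℝ} (hψ'c : Continuous ψ') :
    Measurable fun r => ψ' (g.eval r) * chi (g.eval r) :=
  (hψ'c.measurable.comp g.continuous.measurable).mul
    (measurable_chi.comp g.continuous.measurable)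

lemma abs_half_le {ψ' : ℝ → ℝ} (hψ1 : ∀ v, |ψ' v| ≤ 1) (v : ℝ) : |ψ' v * chi v| ≤ 1 := by
  rw [abs_mul, abs_of_nonneg (chi_nonneg v)]
  calc _ ≤ 1 * 1 := mul_le_mul (hψ1 v) (chi_le_one v) (chi_nonneg v) zero_le_one
    _ = 1 := one_mul 1

lemma half_intervalIntegrable (g : Polynomial ℝ) {ψ' : ℝ → ℝ} (hψ'c : Continuous ψ')
    (hψ1 : ∀ v, |ψ' v| ≤ 1) (a b : ℝ) :
    IntervalIntegrable (fun r => ψ' (g.eval r) * chi (g.eval r)) volume a b := by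
  refine (intervalIntegrable_const (c := (1:ℝ))).mono_fun
    (measurable_half g hψ'c).aestronglyMeasurable (Filter.Eventually.of_forall fun r => ?_)
  simpa using abs_half_le hψ1 (g.eval r)

lemma indicator_intervalIntegrable {S : Set ℝ} (hS : MeasurableSet S) (a b : ℝ) :
    IntervalIntegrable (S.indicator (1 : ℝ → ℝ)) volume a b := by
  refine (intervalIntegrable_const (c := (1:ℝ))).mono_fun
    (measurable_one.indicator hS).aestronglyMeasurable (Filter.Eventually.of_forall fun r => ?_)
  by_cases h : r ∈ S <;> simp [h]

/-- Summing the estimate on the root-free pieces, by removing the largest root. -/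
lemma integral_half_sum {g : Polynomial ℝ} {ψ ψ' : ℝ → ℝ} (hψ : ∀ v, HasDerivAt ψ (ψ' v) v)
    (hψ'c : Continuous ψ') (hψ1 : ∀ v, |ψ' v| ≤ 1) {t s : ℝ} (hs : 0 < s)
    (hψt : ∀ v, |ψ v| ≤ t) {Z : Set ℝ}
    (hZ1 : ∀ r, r ∉ Z → g.eval r ≠ 0)
    (hZ2 : ∀ r, r ∉ Z → g.derivative.eval r ^ 2 - s ^ 2 ≠ 0)
    (hZ3 : g.derivative.derivative = 0 ∨ ∀ r, r ∉ Z → g.derivative.derivative.eval r ≠ 0)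
    (T : Finset ℝ) : ∀ a b, a ≤ b → (∀ r ∈ Set.Ioo a b, r ∈ Z → r ∈ T) →
    |∫ r in a..b, ψ' (g.eval r) * chi (g.eval r)| ≤
      (∫ r in a..b, {r | |g.derivative.eval r| ≤ s}.indicator 1 r) + (T.card + 1) * (4 * t / s) := by
  have ht : 0 ≤ t := (abs_nonneg _).trans (hψt 0)
  have hts : 0 ≤ 4 * t / s := by positivity
  have hSm : MeasurableSet {r | |g.derivative.eval r| ≤ s} :=
    (isClosed_le g.derivative.continuous.abs continuous_const).measurableSet
  have hpiece : ∀ a b, a ≤ b → (∀ r ∈ Set.Ioo a b, r ∉ Z) →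
      |∫ r in a..b, ψ' (g.eval r) * chi (g.eval r)| ≤
      (∫ r in a..b, {r | |g.derivative.eval r| ≤ s}.indicator 1 r) + 4 * t / s := by
    intro a b hab h
    refine integral_half_piece hψ hψ'c hψ1 hs hab hψt (fun r hr => hZ1 r (h r hr))
      (fun r hr => hZ2 r (h r hr)) ?_
    rcases hZ3 with h3 | h3
    · exact Or.inl h3
    · exact Or.inr fun r hr => h3 r (h r hr)
  induction T using Finset.induction_on_max with
  | empty =>
    intro a b hab h
    simpa using hpiece a b hab fun r hr hrZ => by simpa using h r hr hrZ
  | insert c T hc ih =>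
    intro a b hab h
    have hcT : c ∉ T := fun hcT => lt_irrefl c (hc c hcT)
    rw [Finset.card_insert_of_notMem hcT]
    push_cast
    by_cases hcab : c ∈ Set.Ioo a b
    · have h1 := ih a c hcab.1.le fun r hr hrZ => by
        have := h r ⟨hr.1, hr.2.trans hcab.2⟩ hrZ
        rw [Finset.mem_insert] at this
        exact this.resolve_left hr.2.ne
      have h2 := hpiece c b hcab.2.le fun r hr hrZ => by
        have := h r ⟨hcab.1.trans hr.1, hr.2⟩ hrZ
        rw [Finset.mem_insert] at this
        rcases this with h | h
        · exact hr.1.ne' h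
        · exact absurd (hc r h) (not_lt.2 hr.1.le)
      rw [← intervalIntegral.integral_add_adjacent_intervals
        (half_intervalIntegrable g hψ'c hψ1 a c) (half_intervalIntegrable g hψ'c hψ1 c b),
        ← intervalIntegral.integral_add_adjacent_intervals
        (indicator_intervalIntegrable hSm a c) (indicator_intervalIntegrable hSm c b)]
      refine (abs_add_le _ _).trans ?_
      linarith
    · have h1 := ih a b hab fun r hr hrZ => by
        have := h r hr hrZ
        rw [Finset.mem_insert] at this
        exact this.resolve_left fun h => hcab (h ▸ hr)
      linarith

/-- The one-dimensional estimate: along `[0, 1]`, the integral of `ψ'(g) χ(g)` is controlled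
by `(t / g(-1)) ^ (1 / d)`, with a constant independent of the degree bound `d`. -/
lemma one_dim_half {g : Polynomial ℝ} {d : ℕ} (hd : 0 < d) (hg : g.natDegree ≤ d)
    {ψ ψ' : ℝ → ℝ} (hψ : ∀ v, HasDerivAt ψ (ψ' v) v)
    (hψ'c : Continuous ψ') (hψ1 : ∀ v, |ψ' v| ≤ 1) {t τ : ℝ} (ht : 0 < t)
    (hψt : ∀ v, |ψ v| ≤ t) (hτ : 0 < τ) (hτd : τ ^ d * g.eval (-1) = t) {ρ : ℝ}
    (hρ0 : 0 ≤ ρ) (hρ1 : ρ ≤ 1) :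
    |∫ r in (0)..ρ, ψ' (g.eval r) * chi (g.eval r)| ≤ 104 * τ := by
  set M := g.eval (-1) with hM
  have hMpos : 0 < M := by
    by_contra h
    have : τ ^ d * M ≤ 0 := mul_nonpos_of_nonneg_of_nonpos (by positivity) (not_lt.1 h)
    linarith
  have hρb : |∫ r in (0)..ρ, ψ' (g.eval r) * chi (g.eval r)| ≤ 1 := by
    have := intervalIntegral.norm_integral_le_of_norm_le_const (C := 1) (a := 0) (b := ρ)
        (f := fun r => ψ' (g.eval r) * chi (g.eval r)) (fun r _ => abs_half_le hψ1 _)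
    rw [Real.norm_eq_abs, sub_zero, abs_of_nonneg hρ0] at this
    linarith
  -- if `g` stays positive, the integrand vanishes; otherwise the mean value theorem on `[-1, r0]`
  -- gives a point with `|g'| ≥ M / 2`
  by_cases hall : ∀ r ∈ Set.Icc 0 ρ, 0 < g.eval r
  · have e : ∫ r in (0)..ρ, ψ' (g.eval r) * chi (g.eval r) = 0 := by
      rw [intervalIntegral.integral_of_le hρ0]
      refine setIntegral_eq_zero_of_forall_eq_zero fun r hr => ?_
      rw [chi_of_pos (hall r (Set.Ioc_subset_Icc_self hr)), mul_zero]
    rw [e, abs_zero]; positivity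
  push Not at hall
  obtain ⟨r0, hr0, hr0g⟩ := hall
  obtain ⟨ξ, hξ, hξe⟩ := exists_hasDerivAt_eq_slope (fun r => g.eval r)
    (fun r => g.derivative.eval r) (a := -1) (b := r0) (by linarith [hr0.1])
    g.continuous.continuousOn (fun x _ => g.hasDerivAt x)
  have hξM : M / 2 ≤ |g.derivative.eval ξ| := by
    rw [hξe, abs_div, div_le_div_iff₀ two_pos (abs_pos.2 (by linarith [hr0.1]))]
    have e1 : |g.eval r0 - M| = M - g.eval r0 := by rw [abs_of_nonpos (by linarith)]; ring
    have e2 : |r0 - -1| = r0 + 1 := by rw [abs_of_nonneg (by linarith [hr0.1])]; ring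
    rw [e1, e2]
    nlinarith [hr0.1, hr0.2]
  -- the threshold for `|g'|` that balances the two contributions: the set `|g'| ≤ s` has length at
  -- most `24 τ` by the Remez inequality, and `5 d` pieces contribute `4 t / s` each, `80 τ` in total
  set s := M * d * τ ^ (d - 1) / 4 with hs
  have hdpos : (0:ℝ) < d := by exact_mod_cast hd
  have hspos : 0 < s := by positivity
  set E : Set ℝ := Set.Icc 0 1 ∩ {r | |g.derivative.eval r| ≤ s} with hE
  have hEcl : IsClosed {r | |g.derivative.eval r| ≤ s} :=
    isClosed_le g.derivative.continuous.abs continuous_const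
  have hEc : IsCompact E := isCompact_Icc.inter_right hEcl
  have hvE : volume E < ENNReal.ofReal (24 * τ) := by
    by_contra hcon
    push Not at hcon
    have h := remez_eval (P := g.derivative) (m := d - 1) (D := 2) (y := ξ) (s := s)
      ((Polynomial.natDegree_derivative_le g).trans (by omega)) hEc (by positivity) hcon
      (fun x hx => hx.2) (fun x hx => by
        rw [abs_le]; constructor <;> linarith [hx.1.1, hx.1.2, hξ.1, hξ.2, hr0.2])
    have h2 : (d:ℝ) ≤ 2 ^ (d - 1) := by
      have : d ≤ 2 ^ (d - 1) := by
        have := (d - 1).lt_two_pow_self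
        omega
      exact_mod_cast this
    have h3 : s * (6 * 2 / (24 * τ)) ^ (d - 1) = M * d / 4 * (1 / 2) ^ (d - 1) := by
      have : 6 * 2 / (24 * τ) = (1 / 2) * τ⁻¹ := by field_simp; norm_num
      rw [this, mul_pow, hs, inv_pow]
      field_simp
    rw [h3] at h
    have h4 : (d:ℝ) * (1 / 2) ^ (d - 1) ≤ 1 := by
      rw [one_div, inv_pow, ← div_eq_mul_inv]
      exact div_le_one_of_le₀ h2 (by positivity)
    nlinarith
  -- if `g' ^ 2 = s ^ 2` identically, then `E = [0, 1]`, so `1 < 24 τ` and the trivial bound suffices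
  by_cases hd2 : g.derivative ^ 2 - Polynomial.C (s ^ 2) = 0
  · have hE1 : E = Set.Icc 0 1 := by
      refine Set.inter_eq_left.2 fun r _ => ?_
      have := congrArg (Polynomial.eval r) hd2
      simp only [Polynomial.eval_sub, Polynomial.eval_pow, Polynomial.eval_C,
        Polynomial.eval_zero] at this
      exact abs_le_of_sq_le_sq (by linarith) hspos.le
    rw [hE1, Real.volume_Icc, ENNReal.ofReal_lt_ofReal_iff (by positivity)] at hvE
    linarith
  have hg0 : g ≠ 0 := fun h => by rw [hM, h] at hMpos; simp at hMpos
  -- the roots of `Q` cut the interval into pieces on which `g`, `g' ^ 2 - s ^ 2` and `g''` do not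
  -- vanish; a factor `g''` that is identically zero is left out
  set q : Polynomial ℝ := if g.derivative.derivative = 0 then 1 else g.derivative.derivative with hq
  have hq0 : q ≠ 0 := by
    rw [hq]; split_ifs with h
    · exact one_ne_zero
    · exact h
  have hqd : q.natDegree ≤ d := by
    rw [hq]; split_ifs with h
    · simp
    · exact (Polynomial.natDegree_derivative_le _).trans ((Nat.sub_le _ _).trans
        ((Polynomial.natDegree_derivative_le _).trans ((Nat.sub_le _ _).trans hg)))
  set Q := g * (g.derivative ^ 2 - Polynomial.C (s ^ 2)) * q with hQ
  have hQ0 : Q ≠ 0 := mul_ne_zero (mul_ne_zero hg0 hd2) hq0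
  have hQd : Q.natDegree ≤ 4 * d := by
    have h1 : (g.derivative ^ 2 - Polynomial.C (s ^ 2)).natDegree ≤ 2 * d := by
      refine (Polynomial.natDegree_sub_le _ _).trans ?_
      rw [Polynomial.natDegree_C, Nat.max_zero]
      refine Polynomial.natDegree_pow_le.trans ?_
      have := Polynomial.natDegree_derivative_le g
      gcongr
      omega
    refine Polynomial.natDegree_mul_le.trans ?_
    have := Polynomial.natDegree_mul_le (p := g) (q := g.derivative ^ 2 - Polynomial.C (s ^ 2))
    omega
  have hQe : ∀ r, r ∉ {r | Q.eval r = 0} → g.eval r ≠ 0 ∧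
      g.derivative.eval r ^ 2 - s ^ 2 ≠ 0 ∧ q.eval r ≠ 0 := by
    intro r hr
    have hr : Q.eval r ≠ 0 := hr
    rw [hQ] at hr
    simp only [Polynomial.eval_mul, Polynomial.eval_sub, Polynomial.eval_pow,
      Polynomial.eval_C] at hr
    exact ⟨left_ne_zero_of_mul (left_ne_zero_of_mul hr),
      right_ne_zero_of_mul (left_ne_zero_of_mul hr), right_ne_zero_of_mul hr⟩
  have hmain := integral_half_sum hψ hψ'c hψ1 hspos hψt (Z := {r | Q.eval r = 0})
    (fun r hr => (hQe r hr).1) (fun r hr => (hQe r hr).2.1) (by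
      by_cases h : g.derivative.derivative = 0
      · exact Or.inl h
      · refine Or.inr fun r hr => ?_
        have := (hQe r hr).2.2
        rw [hq, if_neg h] at this
        exact this) Q.roots.toFinset 0 ρ hρ0 (fun r _ hr => by
          rw [Multiset.mem_toFinset, Polynomial.mem_roots hQ0]; exact hr)
  have hcard : (Q.roots.toFinset.card : ℝ) + 1 ≤ 5 * d := by
    have h1 : Q.roots.toFinset.card ≤ 4 * d :=
      (Multiset.toFinset_card_le _).trans ((Polynomial.card_roots' Q).trans hQd)
    have h2 : (Q.roots.toFinset.card : ℝ) ≤ 4 * d := by exact_mod_cast h1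
    have h3 : (1:ℝ) ≤ d := by exact_mod_cast hd
    linarith
  have hind : ∫ r in (0)..ρ, {r | |g.derivative.eval r| ≤ s}.indicator (1 : ℝ → ℝ) r ≤ 24 * τ := by
    rw [intervalIntegral.integral_of_le hρ0, setIntegral_indicator hEcl.measurableSet]
    simp only [Pi.one_apply, integral_const, MeasurableSet.univ, measureReal_restrict_apply,
      Set.univ_inter, smul_eq_mul, mul_one]
    have : volume (Set.Ioc 0 ρ ∩ {r | |g.derivative.eval r| ≤ s}) ≤ ENNReal.ofReal (24 * τ) := by
      refine (measure_mono ?_).trans hvE.le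
      exact fun r hr => ⟨⟨hr.1.1.le, hr.1.2.trans hρ1⟩, hr.2⟩
    exact ENNReal.toReal_le_of_le_ofReal (by positivity) this
  have hK : 5 * d * (4 * t / s) = 80 * τ := by
    have : τ ^ d = τ ^ (d - 1) * τ := by rw [← pow_succ]; congr 1; omega
    rw [hs, ← hτd, this]
    field_simp
    norm_num
  have hts : 0 ≤ 4 * t / s := by positivity
  have := mul_le_mul_of_nonneg_right hcard hts
  linarith

/-! ### Integration along rays -/

/-- A ray that starts in the cube leaves it once and for all. -/
lemma ray_mem_antitone {n : ℕ} {x y : Fin n → ℝ} (hy : y ∈ unitCube n) {r s : ℝ} (hr : 0 ≤ r)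
    (hrs : r ≤ s) (hs : y + s • (y - x) ∈ unitCube n) : y + r • (y - x) ∈ unitCube n := by
  rcases (hr.trans hrs).eq_or_lt with h | h
  · have : r = s := by linarith
    rwa [this]
  · have := (convex_Icc _ _ : Convex ℝ (unitCube n)).add_smul_mem hy hs (t := r / s)
      ⟨by positivity, div_le_one_of_le₀ hrs h.le⟩
    rwa [smul_smul, div_mul_cancel₀ _ h.ne'] at this

lemma exists_ray_polynomial {n d : ℕ} (p : MvPolynomial (Fin n) ℝ) (hp : p.totalDegree ≤ d)
    (x y : Fin n → ℝ) : ∃ g : Polynomial ℝ, g.natDegree ≤ d ∧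
      ∀ r, g.eval r = MvPolynomial.eval (y + r • (y - x)) p := by
  obtain ⟨l, hl⟩ : ∃ l : Fin n → Polynomial ℝ,
      ∀ i, l i = Polynomial.C (y i - x i) * Polynomial.X + Polynomial.C (y i) := ⟨_, fun _ => rfl⟩
  refine ⟨MvPolynomial.aeval l p, ?_, fun r => ?_⟩
  · have h1 : ∀ i, (l i).natDegree ≤ 1 := fun i => by
      rw [hl]; exact Polynomial.natDegree_linear_le
    have := MvPolynomial.aeval_natDegree_le p hp l h1
    rwa [mul_one] at this
  · clear hp
    induction p using MvPolynomial.induction_on with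
    | C a => simp
    | add p q h1 h2 => simp only [map_add, Polynomial.eval_add, h1, h2]
    | mul_X p i h1 =>
      simp only [map_mul, Polynomial.eval_mul, h1, MvPolynomial.aeval_X, MvPolynomial.eval_X, hl]
      congr 1
      simp
      ring

/-- The pointwise inequality behind the integration of the ray estimate against the weight
`β = w²`. -/
lemma weight_pointwise {w Z t R : ℝ} {d n : ℕ} (hd : 0 < d) (hn : 0 < n) (hw : 0 < w)
    (hZ : 0 < Z) (ht : 0 < t) (hR : R = 1 / (2 * (min d n : ℕ))) :
    w ^ 2 / Z * ((t / w) ^ (1 / (d : ℝ)) *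
      Real.exp (R * max (min (Real.log (w ^ 2 / Z)) n) 0)) ≤
      t ^ (1 / (d : ℝ)) * Z ^ (-(1 / (2 * (d : ℝ)))) * (2 + 3 * (w ^ 2 / Z)) := by
  set b := w ^ 2 / Z with hb
  have hbpos : 0 < b := by positivity
  set e : ℝ := 1 / (2 * (d : ℝ)) with he
  have hd1 : (1:ℝ) ≤ d := by exact_mod_cast hd
  have hn1 : (1:ℝ) ≤ n := by exact_mod_cast hn
  have he0 : 0 < e := by positivity
  have he1 : e ≤ 1 := by
    rw [he]; exact div_le_one_of_le₀ (by linarith) (by positivity)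
  have h1 : (t / w) ^ (1 / (d : ℝ)) = t ^ (1 / (d : ℝ)) * (b ^ (-e) * Z ^ (-e)) := by
    rw [Real.div_rpow ht.le hw.le, ← Real.mul_rpow hbpos.le hZ.le, div_eq_mul_inv]
    congr 1
    have : b * Z = w ^ (2:ℝ) := by
      rw [hb, div_mul_cancel₀ _ hZ.ne']; norm_cast
    rw [this, ← Real.rpow_mul hw.le, ← Real.rpow_neg hw.le]
    congr 1
    rw [he]; field_simp
  -- for `d ≤ n` use the logarithm in the exponent, for `n ≤ d` the dimension
  have hE : Real.exp (R * max (min (Real.log b) n) 0) ≤ 2 + b ^ e := by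
    have hbe : 0 < b ^ e := Real.rpow_pos_of_pos hbpos e
    rcases le_total d n with hdn | hdn
    · rw [min_eq_left hdn] at hR
      have hRe : R = e := by rw [hR, he]
      rw [hRe]
      rcases le_total (min (Real.log b) n) 0 with h | h
      · rw [max_eq_right h]; simp; linarith
      · rw [max_eq_left h]
        calc Real.exp (e * min (Real.log b) n) ≤ Real.exp (e * Real.log b) := by
              gcongr; exact min_le_left _ _
          _ = b ^ e := by rw [Real.rpow_def_of_pos hbpos, mul_comm]
          _ ≤ _ := by linarith
    · rw [min_eq_right hdn] at hR
      have : R * max (min (Real.log b) n) 0 ≤ 1 / 2 := by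
        have h2 : max (min (Real.log b) n) 0 ≤ (n:ℝ) := max_le (min_le_right _ _) (by linarith)
        calc _ ≤ R * n := by rw [hR]; gcongr
          _ = 1 / 2 := by rw [hR]; field_simp
      have h3 : Real.exp (R * max (min (Real.log b) n) 0) ≤ 2 := by
        refine (Real.exp_le_exp.2 this).trans ?_
        have : Real.exp (1/2) ^ 2 ≤ 2 ^ 2 := by
          rw [← Real.exp_nat_mul]
          norm_num
          linarith [Real.exp_one_lt_d9]
        exact le_of_sq_le_sq this (by norm_num)
      linarith
  have h2 : b * b ^ (-e) ≤ 1 + b := by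
    have : b * b ^ (-e) = b ^ (1 - e) := by
      rw [sub_eq_add_neg, Real.rpow_add hbpos, Real.rpow_one]
    rw [this]
    rcases le_total b 1 with h | h
    · have := Real.rpow_le_one hbpos.le h (by linarith : 0 ≤ 1 - e)
      linarith
    · have := Real.rpow_le_self_of_one_le h (by linarith : 1 - e ≤ 1)
      linarith
  have h3 : b ^ (-e) * b ^ e = 1 := by
    rw [← Real.rpow_add hbpos]; simp
  have hA : 0 < t ^ (1 / (d : ℝ)) * Z ^ (-e) := by positivity
  rw [h1]
  calc b * (t ^ (1 / (d : ℝ)) * (b ^ (-e) * Z ^ (-e)) *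
        Real.exp (R * max (min (Real.log b) n) 0))
      = t ^ (1 / (d : ℝ)) * Z ^ (-e) *
        ((b * b ^ (-e)) * Real.exp (R * max (min (Real.log b) n) 0)) := by ring
    _ ≤ t ^ (1 / (d : ℝ)) * Z ^ (-e) * ((b * b ^ (-e)) * (2 + b ^ e)) := by gcongr
    _ = t ^ (1 / (d : ℝ)) * Z ^ (-e) * (2 * (b * b ^ (-e)) + b * (b ^ (-e) * b ^ e)) := by ring
    _ ≤ t ^ (1 / (d : ℝ)) * Z ^ (-e) * (2 + 3 * b) := by
        rw [h3]
        exact mul_le_mul_of_nonneg_left (by linarith) hA.le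

/-- The estimate on a single ray, with the exponential weight; the part of the ray outside of the
cube is removed by an antitone weight. The parameter `r = -1` corresponds to the point `x`. -/
lemma ray_estimate {n d : ℕ} (hd : 0 < d) {p : MvPolynomial (Fin n) ℝ} (hp : p.totalDegree ≤ d)
    {ψ ψ' : ℝ → ℝ} (hψ : ∀ v, HasDerivAt ψ (ψ' v) v)
    (hψ'c : Continuous ψ') (hψ1 : ∀ v, |ψ' v| ≤ 1) {t : ℝ} (ht : 0 < t)
    (hψt : ∀ v, |ψ v| ≤ t) {R : ℝ} (hR1 : R ≤ 1) {x y : Fin n → ℝ}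
    (hy : y ∈ unitCube n) (c : ℝ) {ρ : ℝ} (hρ : ρ ∈ Set.Icc 0 R) :
    ‖∫ r in Set.Ioc 0 ρ, (unitCube n).indicator
        (fun z => ψ' (MvPolynomial.eval z p) * chi (MvPolynomial.eval z p)) (y + r • (y - x)) *
        Real.exp (c * r)‖ₑ ≤
      ENNReal.ofReal (208 * ((t / max (MvPolynomial.eval x p) t) ^ (1 / (d : ℝ)) *
        Real.exp (R * max c 0))) := by
  obtain ⟨g, hgd, hg⟩ := exists_ray_polynomial p hp x y
  set τ := (t / max (MvPolynomial.eval x p) t) ^ (1 / (d : ℝ)) with hτ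
  have hmax : 0 < max (MvPolynomial.eval x p) t := lt_max_of_lt_right ht
  have hτ0 : 0 < τ := by positivity
  have hbase : ∀ ρ ∈ Set.Icc 0 R, ‖∫ r in Set.Ioc 0 ρ, ψ' (g.eval r) * chi (g.eval r)‖ₑ ≤
      ENNReal.ofReal (104 * τ) := by
    intro ρ hρ
    rw [← intervalIntegral.integral_of_le hρ.1, Real.enorm_eq_ofReal_abs]
    refine ENNReal.ofReal_le_ofReal ?_
    -- where `p x < t` the trivial bound by the length of the interval suffices, since `τ = 1`
    rcases le_total t (MvPolynomial.eval x p) with h | h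
    · refine one_dim_half hd hgd hψ hψ'c hψ1 ht hψt hτ0 ?_ hρ.1 (hρ.2.trans hR1)
      have e1 : g.eval (-1) = MvPolynomial.eval x p := by rw [hg]; congr 2; ext i; simp
      rw [e1, hτ, max_eq_left h, ← Real.rpow_natCast, ← Real.rpow_mul (div_pos ht (ht.trans_le h)).le,
        one_div_mul_cancel (by positivity), Real.rpow_one, div_mul_cancel₀]
      linarith
    · have e1 : τ = 1 := by rw [hτ, max_eq_right h, div_self ht.ne', Real.one_rpow]
      have := intervalIntegral.norm_integral_le_of_norm_le_const (C := 1) (a := 0) (b := ρ)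
        (f := fun r => ψ' (g.eval r) * chi (g.eval r)) (fun r _ => abs_half_le hψ1 _)
      rw [Real.norm_eq_abs, sub_zero, abs_of_nonneg hρ.1] at this
      rw [e1]
      linarith [hρ.2]
  have hi0 : IntegrableOn (fun r => ψ' (g.eval r) * chi (g.eval r)) (Set.Icc 0 R) := by
    refine Integrable.of_bound (measurable_half g hψ'c).aestronglyMeasurable 1
      (Filter.Eventually.of_forall fun r => abs_half_le hψ1 _)
  have hms : MeasurableSet {r : ℝ | y + r • (y - x) ∈ unitCube n} := by
    have hc : Continuous fun r : ℝ => y + r • (y - x) := by fun_prop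
    exact hc.measurable measurableSet_Icc
  set m : ℝ → ℝ := {r : ℝ | y + r • (y - x) ∈ unitCube n}.indicator 1 with hm
  have e : ∀ r, (unitCube n).indicator
        (fun z => ψ' (MvPolynomial.eval z p) * chi (MvPolynomial.eval z p)) (y + r • (y - x)) =
      ψ' (g.eval r) * chi (g.eval r) * m r := by
    intro r
    rw [hg, hm]
    by_cases h : y + r • (y - x) ∈ unitCube n <;> simp [Set.indicator, h]
  have h2 : ∀ ρ ∈ Set.Icc 0 R, ‖∫ r in Set.Ioc 0 ρ, ψ' (g.eval r) * chi (g.eval r) * m r‖ₑ ≤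
      ENNReal.ofReal (104 * τ) := by
    intro ρ hρ
    refine antitone_weight hi0 ?_ ?_ ?_ hbase hρ
    · intro r hr s hs hrs
      by_cases h : y + s • (y - x) ∈ unitCube n
      · have h' := ray_mem_antitone hy hr.1 hrs h
        simp [hm, Set.indicator, h, h']
      · have h0 : m s = 0 := by simp [hm, Set.indicator, h]
        rw [h0]
        exact Set.indicator_nonneg (fun _ _ => zero_le_one) _
    · exact fun r _ => Set.indicator_nonneg (fun _ _ => zero_le_one) _
    · exact fun r _ => Set.indicator_le_self' (fun _ _ => zero_le_one) _
  simp_rw [e]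
  have hi1 : IntegrableOn (fun r => ψ' (g.eval r) * chi (g.eval r) * m r) (Set.Icc 0 R) := by
    refine Integrable.of_bound ((measurable_half g hψ'c).mul
      (measurable_one.indicator hms)).aestronglyMeasurable 1
      (Filter.Eventually.of_forall fun r => ?_)
    rw [norm_mul]
    have h3 : ‖m r‖ ≤ 1 := by
      rw [hm]; by_cases h : y + r • (y - x) ∈ unitCube n <;> simp [Set.indicator, h]
    calc _ ≤ (1:ℝ) * 1 := mul_le_mul (abs_half_le hψ1 _) h3 (norm_nonneg _) zero_le_one
      _ = 1 := one_mul 1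
  refine (exp_weight hi1 h2 c hρ).trans ?_
  rw [← ENNReal.ofReal_mul (by positivity)]
  refine ENNReal.ofReal_le_ofReal (le_of_eq ?_)
  ring

/-- The estimate for the part of the cube on which the polynomial is negative: the transport
estimate with the density `max (p, t)²`, the constant integrand in `r`, and `R = 1 / (2 min d n)`. -/
theorem half_estimate {n d : ℕ} (hd : 0 < d) (hn : 0 < n) {p : MvPolynomial (Fin n) ℝ}
    (hp : p.totalDegree ≤ d) {ψ ψ' : ℝ → ℝ} (hψ : ∀ v, HasDerivAt ψ (ψ' v) v)
    (hψ'c : Continuous ψ') (hψ1 : ∀ v, |ψ' v| ≤ 1) {t : ℝ} (ht : 0 < t)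
    (hψt : ∀ v, |ψ v| ≤ t) :
    |∫ x, ψ' (MvPolynomial.eval x p) * chi (MvPolynomial.eval x p) ∂(cubeMeasure n)| ≤
      2080 * (min d n : ℕ) * (t ^ (1 / (d : ℝ)) *
        (∫ x, (max (MvPolynomial.eval x p) t) ^ 2 ∂(cubeMeasure n)) ^ (-(1 / (2 * (d : ℝ))))) := by
  set N : ℕ := min d n with hN
  have hNpos : 0 < N := lt_min hd hn
  have hN1 : (1:ℝ) ≤ N := by exact_mod_cast hNpos
  set R : ℝ := 1 / (2 * (N : ℝ)) with hR
  have hR0 : 0 < R := by positivity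
  have hR1 : R ≤ 1 := div_le_one_of_le₀ (by linarith) (by positivity)
  have hpc := MvPolynomial.continuous_eval p
  set W : (Fin n → ℝ) → ℝ := fun x => max (MvPolynomial.eval x p) t with hW
  have hWc : Continuous W := hpc.max continuous_const
  have hWpos : ∀ x, 0 < W x := fun x => lt_max_of_lt_right ht
  set Z := ∫ x, W x ^ 2 ∂(cubeMeasure n) with hZ
  have hZpos : 0 < Z := integral_cube_pos (hWc.pow 2) fun x => pow_pos (hWpos x) 2
  set h : ℝ → (Fin n → ℝ) → ℝ := fun _ => (unitCube n).indicator
        (fun z => ψ' (MvPolynomial.eval z p) * chi (MvPolynomial.eval z p)) with hh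
  have hmeas0 : Measurable fun z => ψ' (MvPolynomial.eval z p) * chi (MvPolynomial.eval z p) :=
    (hψ'c.measurable.comp hpc.measurable).mul (measurable_chi.comp hpc.measurable)
  have hmeas : Measurable (h 0) := hmeas0.indicator measurableSet_Icc
  have htr := transport_cube n (β := fun x => W x ^ 2) (hWc.pow 2) (fun x => pow_pos (hWpos x) 2)
    (R := R) (h := h) (hmeas.comp measurable_snd) (fun r z => by
      rw [hh]
      by_cases hz : z ∈ unitCube n
      · simp only [Set.indicator_of_mem hz]; exact abs_half_le hψ1 _
      · simp [Set.indicator_of_notMem hz]) (fun r z hz => Set.indicator_of_notMem hz _)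
    (Θ := fun x c => ENNReal.ofReal (208 * ((t / W x) ^ (1 / (d : ℝ)) * Real.exp (R * max c 0))))
    (by
      have h1 : Measurable fun q : (Fin n → ℝ) × ℝ => (t / W q.1) ^ (1 / (d : ℝ)) := by
        have := hWc.measurable
        fun_prop
      have h2 : Measurable fun q : (Fin n → ℝ) × ℝ => Real.exp (R * max q.2 0) := by fun_prop
      exact ((h1.mul h2).const_mul 208).ennreal_ofReal)
    (fun x c c' hcc => by
      have := hWpos x
      simp only
      gcongr)
    (fun x _ y hy c ρ hρ => ray_estimate hd hp hψ hψ'c hψ1 ht hψt hR1 hy c hρ)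
    0 (ρ := R) ⟨hR0.le, le_rfl⟩
  simp only [zero_mul, Real.exp_zero, mul_one, zero_add] at htr
  have e1 : ∫ z, (unitCube n).indicator
        (fun z => ψ' (MvPolynomial.eval z p) * chi (MvPolynomial.eval z p)) z ∂(cubeMeasure n) =
      ∫ x, ψ' (MvPolynomial.eval x p) * chi (MvPolynomial.eval x p) ∂(cubeMeasure n) := by
    refine integral_congr_ae ?_
    filter_upwards [ae_mem_unitCube n] with z hz
    rw [Set.indicator_of_mem hz]
  simp only [hh] at htr
  rw [e1] at htr
  set I := ∫ x, ψ' (MvPolynomial.eval x p) * chi (MvPolynomial.eval x p) ∂(cubeMeasure n) with hI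
  -- the integrand does not depend on `r`, so the left-hand side of the transport estimate is `R |I|`
  have e2 : ∫ r in Set.Ioc 0 R, I = R * I := by
    rw [integral_const]; simp [hR0.le]
  rw [e2] at htr
  set A := t ^ (1 / (d : ℝ)) * Z ^ (-(1 / (2 * (d : ℝ)))) with hA
  have hA0 : 0 ≤ A := by positivity
  have hbound : ∀ x, ENNReal.ofReal (W x ^ 2 / Z) * ENNReal.ofReal (208 *
      ((t / W x) ^ (1 / (d : ℝ)) * Real.exp (R * max (min (Real.log (W x ^ 2 / Z)) n) 0))) ≤
      ENNReal.ofReal (208 * A * (2 + 3 * (W x ^ 2 / Z))) := by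
    intro x
    have := hWpos x
    rw [← ENNReal.ofReal_mul (by positivity)]
    refine ENNReal.ofReal_le_ofReal ?_
    have h1 := weight_pointwise (w := W x) hd hn (hWpos x) hZpos ht hR
    calc _ = 208 * (W x ^ 2 / Z * ((t / W x) ^ (1 / (d : ℝ)) *
          Real.exp (R * max (min (Real.log (W x ^ 2 / Z)) n) 0))) := by ring
      _ ≤ 208 * (A * (2 + 3 * (W x ^ 2 / Z))) := by gcongr
      _ = _ := by ring
  have htr2 := htr.trans (lintegral_mono hbound)
  have h_int : Integrable (fun x => 208 * A * (2 + 3 * (W x ^ 2 / Z))) (cubeMeasure n) :=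
    continuous_integrable_cube (by fun_prop)
  rw [← ofReal_integral_eq_lintegral_ofReal h_int (Filter.Eventually.of_forall fun x => by
    have := hWpos x
    simp only [Pi.zero_apply]
    positivity)] at htr2
  have e3 : ∫ x, 208 * A * (2 + 3 * (W x ^ 2 / Z)) ∂(cubeMeasure n) = 1040 * A := by
    rw [integral_const_mul, integral_add (integrable_const _)
      (continuous_integrable_cube (by fun_prop)), integral_const_mul, integral_div,
      div_self hZpos.ne']
    simp
    ring
  rw [e3, Real.enorm_eq_ofReal_abs, ENNReal.ofReal_le_ofReal_iff (by positivity), abs_mul,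
    abs_of_pos hR0] at htr2
  have hRN : R * (2 * N) = 1 := by rw [hR]; field_simp
  calc |I| = (2 * N) * (R * |I|) := by rw [← mul_assoc, mul_comm (2 * (N:ℝ)), hRN, one_mul]
    _ ≤ (2 * N) * (1040 * A) := by gcongr
    _ = _ := by ring

/-! ### Centering -/

/-- A centre `c` for which the positive and the negative part of `f - c` have the same
`L²` norm; each of them then carries half of `‖f - c‖²`. -/
lemma exists_center {n : ℕ} {f : (Fin n → ℝ) → ℝ} (hf : Continuous f) :
    ∃ c : ℝ, ∫ x, (f x - c) ^ 2 ∂(cubeMeasure n) = 2 * ∫ x, (max (f x - c) 0) ^ 2 ∂(cubeMeasure n)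
      ∧ ∫ x, (f x - c) ^ 2 ∂(cubeMeasure n) = 2 * ∫ x, (max (c - f x) 0) ^ 2 ∂(cubeMeasure n) := by
  set P : ℝ → ℝ := fun c => ∫ x, (max (f x - c) 0) ^ 2 ∂(cubeMeasure n) with hP
  set Q : ℝ → ℝ := fun c => ∫ x, (max (c - f x) 0) ^ 2 ∂(cubeMeasure n) with hQ
  have hPc : Continuous P := by
    refine continuous_parametric_integral_of_continuous (f := fun (c : ℝ) x => (max (f x - c) 0) ^ 2)
      ?_ isCompact_Icc
    simp only [Function.uncurry_def]
    fun_prop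
  have hQc : Continuous Q := by
    refine continuous_parametric_integral_of_continuous (f := fun (c : ℝ) x => (max (c - f x) 0) ^ 2)
      ?_ isCompact_Icc
    simp only [Function.uncurry_def]
    fun_prop
  obtain ⟨M, hM⟩ := (isCompact_Icc : IsCompact (unitCube n)).exists_bound_of_continuousOn
    hf.continuousOn
  have hP0 : ∀ c, 0 ≤ P c := fun c => integral_nonneg fun x => sq_nonneg _
  have hQ0 : ∀ c, 0 ≤ Q c := fun c => integral_nonneg fun x => sq_nonneg _
  have hPM : P M = 0 := by
    rw [hP]
    refine integral_eq_zero_of_ae ?_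
    filter_upwards [ae_mem_unitCube n] with x hx
    have := abs_le.1 (hM x hx)
    simp [max_eq_right (sub_nonpos.2 this.2)]
  have hQM : Q (-M) = 0 := by
    rw [hQ]
    refine integral_eq_zero_of_ae ?_
    filter_upwards [ae_mem_unitCube n] with x hx
    have := abs_le.1 (hM x hx)
    simp [max_eq_right (sub_nonpos.2 this.1)]
  obtain ⟨c, hc⟩ : ∃ c, P c = Q c := by
    obtain ⟨c, hc⟩ := mem_range_of_exists_le_of_exists_ge (hPc.sub hQc) (c := 0)
      ⟨M, by simp only [Pi.sub_apply]; linarith [hQ0 M]⟩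
      ⟨-M, by simp only [Pi.sub_apply]; linarith [hP0 (-M)]⟩
    exact ⟨c, sub_eq_zero.1 hc⟩
  have hsum : ∫ x, (f x - c) ^ 2 ∂(cubeMeasure n) = P c + Q c := by
    rw [hP, hQ, ← integral_add (continuous_integrable_cube (by fun_prop))
      (continuous_integrable_cube (by fun_prop))]
    congr 1
    ext x
    rcases le_total (f x) c with h | h
    · rw [max_eq_right (by linarith), max_eq_left (by linarith)]; ring
    · rw [max_eq_left (by linarith), max_eq_right (by linarith)]; ring
  refine ⟨c, ?_, ?_⟩
  · rw [hsum]; change _ = 2 * P c; linarith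
  · rw [hsum]; change _ = 2 * Q c; linarith

/-- Both halves together, given a lower bound `L` for the `L²` distance of `f` to the constants. -/
theorem centered_estimate {n d : ℕ} (hd : 0 < d) (hn : 0 < n) {f : MvPolynomial (Fin n) ℝ}
    (hf : f.totalDegree ≤ d) {L : ℝ} (hL : 0 < L)
    (hfL : ∀ c : ℝ, L ≤ ∫ x, (MvPolynomial.eval x f - c) ^ 2 ∂(cubeMeasure n))
    {φ φ' : ℝ → ℝ} (hφ : ∀ v, HasDerivAt φ (φ' v) v)
    (hφ'c : Continuous φ') (hφ1 : ∀ v, |φ' v| ≤ 1) {t : ℝ} (ht : 0 < t)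
    (hφt : ∀ v, |φ v| ≤ t) :
    |∫ x, φ' (MvPolynomial.eval x f) ∂(cubeMeasure n)| ≤
      4160 * (min d n : ℕ) * (t ^ (1 / (d : ℝ)) * (L / 2) ^ (-(1 / (2 * (d : ℝ))))) := by
  have hfc := MvPolynomial.continuous_eval f
  obtain ⟨c, hc1, hc2⟩ := exists_center hfc
  have hLc := hfL c
  have key : ∀ (p : MvPolynomial (Fin n) ℝ), L / 2 ≤
      ∫ x, (max (MvPolynomial.eval x p) 0) ^ 2 ∂(cubeMeasure n) →
      2080 * (min d n : ℕ) * (t ^ (1 / (d : ℝ)) *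
        (∫ x, (max (MvPolynomial.eval x p) t) ^ 2 ∂(cubeMeasure n)) ^ (-(1 / (2 * (d : ℝ))))) ≤
      2080 * (min d n : ℕ) * (t ^ (1 / (d : ℝ)) * (L / 2) ^ (-(1 / (2 * (d : ℝ))))) := by
    intro p hp
    have hpc := MvPolynomial.continuous_eval p
    have h1 : L / 2 ≤ ∫ x, (max (MvPolynomial.eval x p) t) ^ 2 ∂(cubeMeasure n) := by
      refine hp.trans (integral_mono (continuous_integrable_cube (by fun_prop))
        (continuous_integrable_cube (by fun_prop)) fun x => ?_)
      simp only
      gcongr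
    have h2 := Real.rpow_le_rpow_of_nonpos (by positivity) h1
      (by simp : -(1 / (2 * (d : ℝ))) ≤ 0)
    gcongr
  have e1 : ∀ x, MvPolynomial.eval x (f - MvPolynomial.C c) = MvPolynomial.eval x f - c := by simp
  have e2 : ∀ x, MvPolynomial.eval x (MvPolynomial.C c - f) = c - MvPolynomial.eval x f := by simp
  have d1 : (f - MvPolynomial.C c).totalDegree ≤ d := (MvPolynomial.totalDegree_sub_C_le _ _).trans hf
  have d2 : (MvPolynomial.C c - f).totalDegree ≤ d := by
    rw [← neg_sub, MvPolynomial.totalDegree_neg]; exact d1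
  have a1 := (half_estimate hd hn d1 (ψ := fun v => φ (v + c)) (ψ' := fun v => φ' (v + c))
    (fun v => (hφ (v + c)).comp_add_const v c) (by fun_prop) (fun v => hφ1 _) ht
    (fun v => hφt _)).trans (key _ (by simp only [e1]; linarith))
  have a2 := (half_estimate hd hn d2 (ψ := fun v => -φ (c - v)) (ψ' := fun v => φ' (c - v))
    (fun v => by
      have := ((hφ (c - v)).comp_const_sub c v).neg
      rw [neg_neg] at this
      exact this) (by fun_prop) (fun v => hφ1 _) ht
    (fun v => by rw [abs_neg]; exact hφt _)).trans (key _ (by simp only [e2]; linarith))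
  simp only [e1, e2, sub_add_cancel, sub_sub_cancel] at a1 a2
  have hi : ∀ s : ℝ → ℝ, Measurable s → (∀ v, |s v| ≤ 1) → Integrable
      (fun x => φ' (MvPolynomial.eval x f) * s (MvPolynomial.eval x f)) (cubeMeasure n) := by
    intro s hs hs1
    refine Integrable.of_bound ((hφ'c.measurable.comp hfc.measurable).mul
      (hs.comp hfc.measurable)).aestronglyMeasurable 1 (Filter.Eventually.of_forall fun x => ?_)
    rw [norm_mul]
    calc _ ≤ (1:ℝ) * 1 := mul_le_mul (hφ1 _) (hs1 _) (abs_nonneg _) zero_le_one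
      _ = 1 := one_mul 1
  have hchi : ∀ v, |chi v| ≤ 1 := fun v => by rw [abs_of_nonneg (chi_nonneg v)]; exact chi_le_one v
  have hsplit : ∫ x, φ' (MvPolynomial.eval x f) ∂(cubeMeasure n) =
      ∫ x, φ' (MvPolynomial.eval x f) * chi (MvPolynomial.eval x f - c) ∂(cubeMeasure n) +
      ∫ x, φ' (MvPolynomial.eval x f) * chi (c - MvPolynomial.eval x f) ∂(cubeMeasure n) := by
    rw [← integral_add (hi (fun v => chi (v - c)) (measurable_chi.comp (by fun_prop))
      fun v => hchi _) (hi (fun v => chi (c - v)) (measurable_chi.comp (by fun_prop))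
      fun v => hchi _)]
    congr 1
    ext x
    rw [← mul_add, ← neg_sub (MvPolynomial.eval x f) c, chi_add_chi_neg, mul_one]
  rw [hsplit]
  refine (abs_add_le _ _).trans ((add_le_add a1 a2).trans (le_of_eq ?_))
  ring

/-! ### The lower bound for the `L²` norm -/

/-- The pairing of `p` with `q` in `L²(-1/2, 1/2)`. -/
noncomputable def pairing (p q : Polynomial ℝ) : ℝ := ∫ x in (-(1/2) : ℝ)..(1/2), p.eval x * q.eval x

lemma pairing_integrable (p q : Polynomial ℝ) :
    IntervalIntegrable (fun x => p.eval x * q.eval x) volume (-(1/2) : ℝ) (1/2) :=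
  (by fun_prop : Continuous fun x => p.eval x * q.eval x).intervalIntegrable _ _

lemma pairing_add_left (p q r : Polynomial ℝ) :
    pairing (p + q) r = pairing p r + pairing q r := by
  simp only [pairing, Polynomial.eval_add, add_mul]
  exact intervalIntegral.integral_add (pairing_integrable _ _) (pairing_integrable _ _)

lemma pairing_smul_left (a : ℝ) (p r : Polynomial ℝ) :
    pairing (a • p) r = a * pairing p r := by
  simp only [pairing, Polynomial.eval_smul, smul_eq_mul, mul_assoc]
  exact intervalIntegral.integral_const_mul _ _

lemma pairing_comm (p q : Polynomial ℝ) : pairing p q = pairing q p := by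
  simp only [pairing, mul_comm]

lemma pairing_self_pos {p : Polynomial ℝ} (hp : p ≠ 0) : 0 < pairing p p := by
  refine intervalIntegral.integral_pos (by norm_num)
    (by fun_prop : Continuous fun x => p.eval x * p.eval x).continuousOn
    (fun x _ => mul_self_nonneg _) ?_
  by_contra! h
  refine hp (Polynomial.eq_zero_of_infinite_isRoot p ?_)
  refine (Set.Icc_infinite (by norm_num : (-(1/2) : ℝ) < 1/2)).mono fun x hx => ?_
  exact mul_self_eq_zero.1 (le_antisymm (h x hx) (mul_self_nonneg _))

/-- If the monomials up to degree `k` pair with `q` as prescribed, so do all polynomials of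
degree at most `k`. -/
lemma pairing_eq_coeff {q p : Polynomial ℝ} {k : ℕ}
    (hq : ∀ j < k, pairing (Polynomial.X ^ j) q = 0) (hp : p.natDegree ≤ k) :
    pairing p q = p.coeff k * pairing (Polynomial.X ^ k) q := by
  let Λ : Polynomial ℝ →ₗ[ℝ] ℝ :=
    { toFun := fun p => pairing p q
      map_add' := fun a b => pairing_add_left a b q
      map_smul' := fun a b => pairing_smul_left a b q }
  change Λ p = _
  conv_lhs => rw [p.as_sum_range' (k + 1) (by omega)]
  rw [map_sum, Finset.sum_range_succ,
    Finset.sum_eq_zero, zero_add]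
  · rw [← Polynomial.smul_X_eq_monomial, map_smul]
    rfl
  · intro j hj
    rw [← Polynomial.smul_X_eq_monomial, map_smul]
    change _ • pairing _ q = 0
    rw [hq j (Finset.mem_range.1 hj), smul_zero]

/-- A unit polynomial of degree at most `k` orthogonal to all lower powers: a nonzero element of the
kernel of a linear map from dimension `k + 1` to dimension `k`, normalised. -/
lemma exists_orthogonal (k : ℕ) : ∃ q : Polynomial ℝ, q.natDegree ≤ k ∧
    (∀ j < k, pairing (Polynomial.X ^ j) q = 0) ∧ pairing q q = 1 := by
  let T : Polynomial.degreeLT ℝ (k + 1) →ₗ[ℝ] (Fin k → ℝ) :=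
    { toFun := fun p j => pairing p.1 (Polynomial.X ^ (j : ℕ))
      map_add' := fun a b => by ext j; exact pairing_add_left _ _ _
      map_smul' := fun a b => by ext j; exact pairing_smul_left _ _ _ }
  have : FiniteDimensional ℝ (Polynomial.degreeLT ℝ (k + 1)) :=
    (Polynomial.degreeLTEquiv ℝ (k + 1)).symm.finiteDimensional
  have hT : LinearMap.ker T ≠ ⊥ := by
    refine LinearMap.ker_ne_bot_of_finrank_lt ?_
    rw [(Polynomial.degreeLTEquiv ℝ (k + 1)).finrank_eq]
    simp
  obtain ⟨p, hp, hp0⟩ := (Submodule.ne_bot_iff _).1 hT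
  have hp0' : (p : Polynomial ℝ) ≠ 0 := fun h => hp0 (Subtype.ext h)
  have hpos := pairing_self_pos hp0'
  refine ⟨(Real.sqrt (pairing p.1 p.1))⁻¹ • p.1, ?_, fun j hj => ?_, ?_⟩
  · refine (Polynomial.natDegree_smul_le _ _).trans ?_
    have := (Polynomial.mem_degreeLT.1 p.2)
    exact Nat.lt_succ_iff.1 ((Polynomial.natDegree_lt_iff_degree_lt hp0').2 this)
  · rw [pairing_comm, pairing_smul_left]
    have : T p = 0 := hp
    have := congr_fun this ⟨j, hj⟩
    change pairing p.1 (Polynomial.X ^ j) = 0 at this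
    rw [this, mul_zero]
  · rw [pairing_smul_left, pairing_comm p.1 (_ • p.1), pairing_smul_left, ← mul_assoc, ← mul_inv,
      Real.mul_self_sqrt hpos.le, inv_mul_cancel₀ hpos.ne']

/-- The leading coefficient of a polynomial of unit `L²` norm is at most `16 ^ k`: by Chebyshev's
inequality the polynomial is bounded by `2` on a set of measure at least `3/4`. -/
lemma coeff_sq_le {q : Polynomial ℝ} {k : ℕ} (hq : q.natDegree ≤ k) (h1 : pairing q q = 1) :
    (q.coeff k) ^ 2 ≤ 256 ^ k := by
  rcases Nat.eq_zero_or_pos k with rfl | hk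
  · obtain ⟨a, rfl⟩ : ∃ a, q = Polynomial.C a :=
      ⟨_, Polynomial.eq_C_of_natDegree_le_zero hq⟩
    simp only [pairing, Polynomial.eval_C] at h1
    rw [intervalIntegral.integral_const] at h1
    norm_num at h1
    simp only [Polynomial.coeff_C_zero, pow_zero]
    nlinarith
  set I : Set ℝ := Set.Icc (-(1/2)) (1/2)
  have hc : Continuous fun x => q.eval x := by fun_prop
  set E : Set ℝ := I ∩ {x | |q.eval x| ≤ 2} with hE
  have hEc : IsCompact E := isCompact_Icc.inter_right (isClosed_le hc.abs continuous_const)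
  have hmes : MeasurableSet {x | |q.eval x| ≤ 2} :=
    (isClosed_le hc.abs continuous_const).measurableSet
  have hbad : 4 * (volume.restrict I).real {x | 4 ≤ q.eval x * q.eval x} ≤ 1 := by
    rw [← h1, pairing, intervalIntegral.integral_of_le (by norm_num),
      ← integral_Icc_eq_integral_Ioc]
    exact mul_meas_ge_le_integral_of_nonneg (Filter.Eventually.of_forall fun x => mul_self_nonneg _)
      ((by fun_prop : Continuous fun x => q.eval x * q.eval x).continuousOn.integrableOn_compact
        isCompact_Icc) 4
  have htot : (1:ℝ) ≤ (volume.restrict I).real {x | |q.eval x| ≤ 2} +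
      (volume.restrict I).real {x | 4 ≤ q.eval x * q.eval x} := by
    have h2 : (volume.restrict I).real Set.univ = 1 := by
      simp [Measure.real, I, Real.volume_Icc]; norm_num
    rw [← h2]
    refine (measureReal_mono ?_).trans (measureReal_union_le _ _)
    intro x _
    rcases le_total |q.eval x| 2 with h | h
    · exact Or.inl h
    · right
      change (4:ℝ) ≤ q.eval x * q.eval x
      rw [← abs_mul_abs_self]
      nlinarith
  have hvol : ENNReal.ofReal (3/4) ≤ volume E := by
    have h3 : volume E = (volume.restrict I) {x | |q.eval x| ≤ 2} := by
      rw [Measure.restrict_apply hmes, Set.inter_comm]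
    rw [h3, ← ofReal_measureReal]
    refine ENNReal.ofReal_le_ofReal ?_
    linarith
  have hr := remez_coeff hq hEc (by norm_num) hvol fun x hx => hx.2
  have h8 : (6 / (3/4) : ℝ) = 8 := by norm_num
  rw [h8] at hr
  have h16 : (2:ℝ) * 8 ^ k ≤ 16 ^ k := by
    have : (16:ℝ) = 2 * 8 := by norm_num
    rw [this, mul_pow]
    gcongr
    exact le_self_pow₀ (by norm_num) hk.ne'
  calc q.coeff k ^ 2 = |q.coeff k| ^ 2 := (sq_abs _).symm
    _ ≤ (16 ^ k) ^ 2 := by gcongr; exact hr.trans h16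
    _ = 256 ^ k := by rw [← pow_mul, mul_comm, pow_mul]; norm_num

/-- An orthonormal system of polynomials in `L²(-1/2, 1/2)`; the lower bound on the pairing of
`X ^ k` with `q k` is dual to the bound on the leading coefficient of `q k`. -/
lemma exists_orthonormal : ∃ q : ℕ → Polynomial ℝ,
    (∀ k, ∀ j < k, pairing (Polynomial.X ^ j) (q k) = 0) ∧
    (∀ k, pairing (q k) (q k) = 1) ∧ (∀ j k, j ≠ k → pairing (q j) (q k) = 0) ∧
    ∀ k, (1 / 256 : ℝ) ^ k ≤ pairing (Polynomial.X ^ k) (q k) ^ 2 := by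
  choose q hd ho h1 using exists_orthogonal
  have hlt : ∀ j k, j < k → pairing (q j) (q k) = 0 := fun j k hjk => by
    rw [pairing_eq_coeff (ho k) ((hd j).trans hjk.le),
      Polynomial.coeff_eq_zero_of_natDegree_lt ((hd j).trans_lt hjk), zero_mul]
  refine ⟨q, ho, h1, fun j k hjk => ?_, fun k => ?_⟩
  · rcases hjk.lt_or_gt with h | h
    · exact hlt j k h
    · rw [pairing_comm]; exact hlt k j h
  · have h2 := pairing_eq_coeff (ho k) (hd k)
    rw [h1 k] at h2
    have h3 := coeff_sq_le (hd k) (h1 k)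
    have h4 : (1:ℝ) = (q k).coeff k ^ 2 * pairing (Polynomial.X ^ k) (q k) ^ 2 := by
      rw [← mul_pow, ← h2, one_pow]
    rw [one_div, inv_pow, inv_le_iff_one_le_mul₀ (by positivity), mul_comm]
    calc (1:ℝ) = _ := h4
      _ ≤ _ := by gcongr

lemma integral_cube_prod {n : ℕ} (g : Fin n → Polynomial ℝ) (h : Fin n → Polynomial ℝ) :
    ∫ x, (∏ i, (g i).eval (x i)) * (∏ i, (h i).eval (x i)) ∂(cubeMeasure n) =
      ∏ i, pairing (g i) (h i) := by
  have hμ : cubeMeasure n =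
      Measure.pi fun _ : Fin n => (volume : Measure ℝ).restrict (Set.Icc (-(1/2)) (1/2)) := by
    rw [← Measure.restrict_pi_pi, Set.pi_univ_Icc, ← volume_pi]
    rfl
  simp_rw [← Finset.prod_mul_distrib]
  rw [hμ, integral_fintype_prod_eq_prod (fun i (y : ℝ) => (g i).eval y * (h i).eval y)]
  refine Finset.prod_congr rfl fun i _ => ?_
  rw [pairing, intervalIntegral.integral_of_le (by norm_num), ← integral_Icc_eq_integral_Ioc]

/-- Bessel's inequality for finitely many continuous functions on the cube. -/
lemma bessel {n : ℕ} {ι : Type*} [DecidableEq ι] (S : Finset ι) {p : (Fin n → ℝ) → ℝ}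
    (hp : Continuous p) {ψ : ι → (Fin n → ℝ) → ℝ} (hψ : ∀ u, Continuous (ψ u))
    (horth : ∀ u v, ∫ x, ψ u x * ψ v x ∂(cubeMeasure n) = if u = v then 1 else 0) :
    ∑ u ∈ S, (∫ x, p x * ψ u x ∂(cubeMeasure n)) ^ 2 ≤ ∫ x, p x ^ 2 ∂(cubeMeasure n) := by
  set c : ι → ℝ := fun u => ∫ x, p x * ψ u x ∂(cubeMeasure n) with hc
  have h0 : 0 ≤ ∫ x, (p x - ∑ u ∈ S, c u * ψ u x) ^ 2 ∂(cubeMeasure n) :=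
    integral_nonneg fun x => sq_nonneg _
  have e : ∀ x, (p x - ∑ u ∈ S, c u * ψ u x) ^ 2 = p x ^ 2 - 2 * ∑ u ∈ S, c u * (p x * ψ u x) +
      ∑ u ∈ S, ∑ v ∈ S, c u * c v * (ψ u x * ψ v x) := by
    intro x
    have h1 : ∑ u ∈ S, c u * (p x * ψ u x) = p x * ∑ u ∈ S, c u * ψ u x := by
      rw [Finset.mul_sum]; exact Finset.sum_congr rfl fun u _ => by ring
    have h2 : ∑ u ∈ S, ∑ v ∈ S, c u * c v * (ψ u x * ψ v x) =
        (∑ u ∈ S, c u * ψ u x) * ∑ u ∈ S, c u * ψ u x := by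
      rw [Finset.sum_mul_sum]
      exact Finset.sum_congr rfl fun u _ => Finset.sum_congr rfl fun v _ => by ring
    rw [h1, h2]; ring
  simp_rw [e] at h0
  rw [integral_add (continuous_integrable_cube (by fun_prop))
      (continuous_integrable_cube (by fun_prop)),
    integral_sub (continuous_integrable_cube (by fun_prop))
      (continuous_integrable_cube (by fun_prop)), integral_const_mul,
    integral_finsetSum _ fun u _ => continuous_integrable_cube (by fun_prop),
    integral_finsetSum _ fun u _ => continuous_integrable_cube (by fun_prop)] at h0
  have e2 : ∑ u ∈ S, ∫ x, c u * (p x * ψ u x) ∂(cubeMeasure n) = ∑ u ∈ S, c u ^ 2 :=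
    Finset.sum_congr rfl fun u _ => by rw [integral_const_mul, sq]
  have e3 : ∑ u ∈ S, ∫ x, ∑ v ∈ S, c u * c v * (ψ u x * ψ v x) ∂(cubeMeasure n) =
      ∑ u ∈ S, c u ^ 2 := by
    refine Finset.sum_congr rfl fun u hu => ?_
    rw [integral_finsetSum _ fun v _ => continuous_integrable_cube (by fun_prop)]
    simp_rw [integral_const_mul, horth]
    simp [hu, sq]
  rw [e2, e3] at h0
  linarith

/-- The top-degree coefficients are controlled by the `L²` norm: apply Bessel's inequality to the
products of one-dimensional orthonormal polynomials, of multidegrees `u ∈ S`. Such a product is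
orthogonal to every monomial of degree at most `D` other than `x ^ u`. -/
lemma sum_top_sq_le {n : ℕ} {D : ℕ} (f : MvPolynomial (Fin n) ℝ) (hf : f.totalDegree ≤ D)
    (S : Finset (Fin n →₀ ℕ)) (hS : ∀ u ∈ S, ∑ i, u i = D) :
    (1 / 256 : ℝ) ^ D * ∑ u ∈ S, f.coeff u ^ 2 ≤
      ∫ x, (MvPolynomial.eval x f) ^ 2 ∂(cubeMeasure n) := by
  classical
  obtain ⟨q, ho, h1, horth, hγ⟩ := exists_orthonormal
  set ψ : (Fin n →₀ ℕ) → (Fin n → ℝ) → ℝ := fun u x => ∏ i, (q (u i)).eval (x i) with hψ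
  have hψc : ∀ u, Continuous (ψ u) := fun u => by
    simp only [hψ]
    fun_prop
  refine le_trans ?_ (bessel S (MvPolynomial.continuous_eval f) hψc fun u v => ?_)
  · rw [Finset.mul_sum]
    refine Finset.sum_le_sum fun u hu => ?_
    have hval : ∫ x, MvPolynomial.eval x f * ψ u x ∂(cubeMeasure n) =
        f.coeff u * ∏ i, pairing (Polynomial.X ^ (u i)) (q (u i)) := by
      simp_rw [MvPolynomial.eval_eq', Finset.sum_mul, mul_assoc]
      rw [integral_finsetSum _ fun v _ => continuous_integrable_cube (by fun_prop)]
      have hterm : ∀ v : Fin n →₀ ℕ, ∫ x, (∏ i, x i ^ v i) * ψ u x ∂(cubeMeasure n) =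
          ∏ i, pairing (Polynomial.X ^ (v i)) (q (u i)) := fun v => by
        rw [← integral_cube_prod]
        simp [hψ]
      simp_rw [integral_const_mul, hterm]
      refine Finset.sum_eq_single u (fun v hv hvu => ?_) (fun h => ?_)
      · -- a monomial of degree at most `D` other than `u` has a smaller exponent somewhere
        obtain ⟨i, hi⟩ : ∃ i, v i < u i := by
          by_contra! hle
          have h2 : ∑ i, v i ≤ D := by
            have := (MvPolynomial.le_totalDegree hv).trans hf
            rwa [Finsupp.sum_fintype _ _ (fun _ => rfl)] at this
          have h3 : ∑ i, u i = ∑ i, v i :=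
            le_antisymm (Finset.sum_le_sum fun i _ => hle i) (by rw [hS u hu]; exact h2)
          have h4 := (Finset.sum_eq_sum_iff_of_le fun i _ => hle i).1 h3
          exact hvu (Finsupp.ext fun i => (h4 i (Finset.mem_univ i)).symm)
        rw [Finset.prod_eq_zero (Finset.mem_univ i) (ho _ _ hi), mul_zero]
      · rw [MvPolynomial.notMem_support_iff.1 h, zero_mul]
    rw [hval, mul_pow, mul_comm, ← Finset.prod_pow, ← hS u hu, ← Finset.prod_pow_eq_pow_sum]
    gcongr with i
    exact hγ _
  · simp only [hψ]
    rw [integral_cube_prod]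
    split_ifs with h
    · subst h; simp [h1]
    · obtain ⟨i, hi⟩ : ∃ i, u i ≠ v i := by
        by_contra! hall
        exact h (Finsupp.ext hall)
      exact Finset.prod_eq_zero (Finset.mem_univ i) (horth _ _ hi)

/-! ### Proof of the regularity estimate -/

lemma leadingL2_sq {n : ℕ} (f : MvPolynomial (Fin n) ℝ) : leadingL2 f ^ 2 =
    ∑ u ∈ f.support.filter fun u => (u.sum fun _ e => e) = f.totalDegree, f.coeff u ^ 2 :=
  Real.sq_sqrt (Finset.sum_nonneg fun _ _ => sq_nonneg _)

lemma leadingL2_pos {n : ℕ} {f : MvPolynomial (Fin n) ℝ} (hf : f ≠ 0) : 0 < leadingL2 f := by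
  refine Real.sqrt_pos.2 ?_
  obtain ⟨u, hu, hmax⟩ := Finset.exists_mem_eq_sup f.support
    (MvPolynomial.support_nonempty.2 hf) fun u => u.sum fun _ e => e
  refine Finset.sum_pos' (fun _ _ => sq_nonneg _) ⟨u, Finset.mem_filter.2 ⟨hu, hmax.symm⟩, ?_⟩
  have := MvPolynomial.mem_support_iff.1 hu
  positivity

/-- Subtracting a constant changes no coefficient of positive degree. -/
lemma leadingL2_le_dist {n d : ℕ} {f : MvPolynomial (Fin n) ℝ} (hf : 0 < f.totalDegree)
    (hd : f.totalDegree ≤ d) (c : ℝ) :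
    (1 / 256 : ℝ) ^ d * leadingL2 f ^ 2 ≤
      ∫ x, (MvPolynomial.eval x f - c) ^ 2 ∂(cubeMeasure n) := by
  set S := f.support.filter fun u => (u.sum fun _ e => e) = f.totalDegree with hS
  have hSd : ∀ u ∈ S, ∑ i, u i = f.totalDegree := fun u hu => by
    have := (Finset.mem_filter.1 hu).2
    rwa [Finsupp.sum_fintype _ _ fun _ => rfl] at this
  have h := sum_top_sq_le (f - MvPolynomial.C c) (MvPolynomial.totalDegree_sub_C_le _ _) S hSd
  have hco : ∑ u ∈ S, (f - MvPolynomial.C c).coeff u ^ 2 = ∑ u ∈ S, f.coeff u ^ 2 := by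
    refine Finset.sum_congr rfl fun u hu => ?_
    have hu0 : 0 ≠ u := by
      rintro rfl
      have := hSd 0 hu
      simp at this
      omega
    rw [MvPolynomial.coeff_sub, MvPolynomial.coeff_C, if_neg hu0, sub_zero]
  rw [hco, ← leadingL2_sq] at h
  simp only [map_sub, MvPolynomial.eval_C] at h
  refine le_trans ?_ h
  gcongr ?_ * _
  exact pow_le_pow_of_le_one (by norm_num) (by norm_num) hd

/-- The constants of the `L²` bound disappear under the root of order `2 d`. -/
lemma rpow_half_sq {A : ℝ} (hA : 0 < A) {d : ℕ} (hd : 0 < d) :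
    ((1 / 256 : ℝ) ^ d * A ^ 2 / 2) ^ (-(1 / (2 * (d : ℝ)))) ≤ 32 * A ^ (-(1 / (d : ℝ))) := by
  have hd1 : (1:ℝ) ≤ d := by exact_mod_cast hd
  have hbase : (1 / 1024 : ℝ) ^ d * A ^ 2 ≤ (1 / 256 : ℝ) ^ d * A ^ 2 / 2 := by
    have h1 : (1 / 1024 : ℝ) ^ d = (1 / 256) ^ d * (1 / 4) ^ d := by
      rw [← mul_pow]; norm_num
    have h2 : (1 / 4 : ℝ) ^ d ≤ 1 / 2 :=
      (pow_le_of_le_one (by norm_num) (by norm_num) hd.ne').trans (by norm_num)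
    rw [h1]
    calc (1 / 256 : ℝ) ^ d * (1 / 4) ^ d * A ^ 2 ≤ (1 / 256 : ℝ) ^ d * (1 / 2) * A ^ 2 := by gcongr
      _ = _ := by ring
  refine (Real.rpow_le_rpow_of_nonpos (by positivity) hbase
    (neg_nonpos.2 (by positivity))).trans (le_of_eq ?_)
  have h3 : (1 / 1024 : ℝ) ^ d * A ^ 2 = (32⁻¹ ^ (d:ℝ) * A) ^ (2:ℝ) := by
    rw [Real.rpow_natCast, Real.rpow_two, mul_pow, ← pow_mul, mul_comm d 2, pow_mul]; norm_num
  rw [h3, ← Real.rpow_mul (by positivity)]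
  have h4 : 2 * -(1 / (2 * (d:ℝ))) = -(1 / (d:ℝ)) := by field_simp
  rw [h4, Real.mul_rpow (by positivity) hA.le, ← Real.rpow_mul (by norm_num)]
  have h5 : (d:ℝ) * -(1 / (d:ℝ)) = -1 := by field_simp
  rw [h5, Real.rpow_neg_one, inv_inv]

end CubeReg

open CubeReg

/-- **Regularity of polynomial images of the uniform measure on the cube.**  There is
an absolute constant `C > 0` such that for all `d, n ∈ ℕ` and every non-constant
polynomial `f` of degree at most `d`,
`σ(μ_{Qⁿ}∘f⁻¹, t) ≤ C min{d,n} [f]₂^{-1/d} t^{1/d}` for all `t > 0`. -/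
theorem cube_regularity_l2 :
    ∃ C : ℝ, 0 < C ∧ ∀ (d n : ℕ), 0 < d → 0 < n →
      ∀ f : MvPolynomial (Fin n) ℝ, f.totalDegree ≤ d →
        (¬ ∃ c : ℝ, ∀ x : Fin n → ℝ, MvPolynomial.eval x f = c) →
      ∀ t : ℝ, 0 < t →
        sigmaMod (Measure.map (fun x => MvPolynomial.eval x f) (cubeMeasure n)) t ≤
          C * min (d : ℝ) (n : ℝ) * leadingL2 f ^ (-(1 / (d : ℝ))) * t ^ (1 / (d : ℝ)) := by
  refine ⟨133120, by norm_num, fun d n hd hn f hfd hconst t ht => ?_⟩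
  have hD : 0 < f.totalDegree := by
    refine Nat.pos_of_ne_zero fun h => hconst ⟨f.coeff 0, fun x => ?_⟩
    rw [MvPolynomial.totalDegree_eq_zero_iff_eq_C.1 h]
    simp
  have hf0 : f ≠ 0 := by
    rintro rfl
    simp at hD
  have hA := leadingL2_pos hf0
  have hmin : (0:ℝ) ≤ min (d : ℝ) (n : ℝ) := by positivity
  refine Real.sSup_le ?_ (by positivity)
  rintro y ⟨φ, ⟨hsm, -⟩, hφt, hφ1, rfl⟩
  have hφ : ∀ v, HasDerivAt φ (deriv φ v) v := fun v =>
    (hsm.differentiable (by simp) v).hasDerivAt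
  have hφc : Continuous (deriv φ) := hsm.continuous_deriv (by simp)
  rw [integral_map (MvPolynomial.continuous_eval f).aemeasurable hφc.aestronglyMeasurable]
  refine (le_abs_self _).trans ((centered_estimate hd hn hfd (by positivity)
    (leadingL2_le_dist hD hfd) hφ hφc hφ1 ht hφt).trans ?_)
  rw [Nat.cast_min]
  calc 4160 * min (d : ℝ) (n : ℝ) * (t ^ (1 / (d : ℝ)) *
        ((1 / 256 : ℝ) ^ d * leadingL2 f ^ 2 / 2) ^ (-(1 / (2 * (d : ℝ)))))
      ≤ 4160 * min (d : ℝ) (n : ℝ) * (t ^ (1 / (d : ℝ)) *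
        (32 * leadingL2 f ^ (-(1 / (d : ℝ))))) := by
        gcongr
        exact rpow_half_sq hA hd
    _ = _ := by ring
end
end
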